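/- Let (R, m) be a d-dimensional complete Noetherian local domain of prime characteristic p with absolute integral closure R^+, let Λ be an uncountable set of indeterminates, and let T = R^+(t_λ : λ ∈ Λ). Let x_1, …, x_d be a system of parameters of R. Then for every 1 ≤ n ≤ d and every y ∈ R, there exists a positive integer N_0 such that (x_1, …, x_n)T :_T y^∞ = (x_1, …, x_n)T :_T y^{N_0}. -/

import Mathlib

open IsLocalRing TensorProduct
set_option synthInstance.maxHeartbeats 1000000
set_option maxHeartbeats 1000000

/-- The absolute integral closure `R⁺` of a domain `R`: the integral closure of `R`
in an algebraic closure of its fraction field. -/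
noncomputable abbrev RPlus (R : Type) [CommRing R] [IsDomain R] : Type :=
  ↥(integralClosure R (AlgebraicClosure (FractionRing R)))

/-- A system of parameters of a local ring: `d` elements generating an ideal whose
radical is the maximal ideal, where `d` is the Krull dimension. -/
def IsSOP (R : Type) [CommRing R] [IsLocalRing R] {d : ℕ} (x : Fin d → R) : Prop :=
  ringKrullDim R = d ∧ (Ideal.span (Set.range x)).radical = maximalIdeal R

/-- `T = R⁺(t_λ : λ ∈ Λ)`: the localization of the polynomial ring `R⁺[t_λ : λ ∈ Λ]`
at the prime ideal generated by the maximal ideal of the quasilocal ring `R⁺`. -/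
noncomputable abbrev TRing (R : Type) [CommRing R] [IsDomain R] (Λ : Type)
    [IsLocalRing (RPlus R)]
    [hP : (Ideal.map (MvPolynomial.C (σ := Λ)) (maximalIdeal (RPlus R))).IsPrime] : Type :=
  Localization.AtPrime (Ideal.map (MvPolynomial.C (σ := Λ)) (maximalIdeal (RPlus R)))

/-- The canonical map `R⁺ → T`. -/
noncomputable def plusToT (R : Type) [CommRing R] [IsDomain R] (Λ : Type)
    [IsLocalRing (RPlus R)]
    [hP : (Ideal.map (MvPolynomial.C (σ := Λ)) (maximalIdeal (RPlus R))).IsPrime] :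
    RPlus R →+* TRing R Λ :=
  (algebraMap (MvPolynomial Λ (RPlus R)) (TRing R Λ)).comp MvPolynomial.C

/-- The canonical map `R → T`. -/
noncomputable def toT (R : Type) [CommRing R] [IsDomain R] (Λ : Type)
    [IsLocalRing (RPlus R)]
    [hP : (Ideal.map (MvPolynomial.C (σ := Λ)) (maximalIdeal (RPlus R))).IsPrime] :
    R →+* TRing R Λ :=
  (plusToT R Λ).comp (algebraMap R (RPlus R))

/-!
By Cohen's structure theorem there is a finite injective map from `A = k⟦X₁, …, X_d⟧` to `R` with
`Xᵢ ↦ xᵢ`. The heart of the matter is that `R⁺` is flat over `A`, i.e. big Cohen-Macaulay. This is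
proved prime by prime in `A`. If `R⁺` is flat on the punctured spectrum of `A_P`, then powers of
each element of the maximal ideal factor finitely generated submodules of `R⁺` through free modules,
which confines the Frobenius powers of an element of a colon ideal `(a₁, …, aₘ)R⁺ : b` to one
finitely generated module. Noetherianity gives a monic additive equation between them, which can be
solved in `R⁺`, so the element lies in `(a₁, …, aₘ)R⁺`. A module of finite flat dimension on which a
system of parameters is regular is then flat.

Since `T` is flat over `R⁺`, it is flat over `A`, so every `c ∈ A` outside the prime
`I = (X₁, …, Xₙ)` is a nonzerodivisor on `T / IT`. Applied to the lowest coefficient outside `I` of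
an equation of integral dependence of `y` over `A`, this bounds the exponent needed in the colon.
-/

universe u

/-! ### Short exact sequences and flatness -/

section ShortExact

open Function

variable {B K F M N N₁ N₂ N₃ : Type*} [CommRing B]
  [AddCommGroup K] [Module B K] [AddCommGroup F] [Module B F] [AddCommGroup M] [Module B M]
  [AddCommGroup N] [Module B N] [AddCommGroup N₁] [Module B N₁] [AddCommGroup N₂] [Module B N₂]
  [AddCommGroup N₃] [Module B N₃] {i : K →ₗ[B] F} {f : F →ₗ[B] M}

/-- Exactness of the sequence `0 → K → F → M → 0` of modules with maps `i` and `f`. -/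
structure IsShortExact (i : K →ₗ[B] F) (f : F →ₗ[B] M) : Prop where
  injective : Injective i
  exact : Exact i f
  surjective : Surjective f

theorem isShortExact_ker_subtype (hf : Surjective f) :
    IsShortExact (LinearMap.ker f).subtype f :=
  ⟨Subtype.val_injective, f.exact_subtype_ker_map, hf⟩

theorem IsShortExact.localizedModule_map (h : IsShortExact i f) (S : Submonoid B) :
    IsShortExact (LocalizedModule.map S i) (LocalizedModule.map S f) :=
  ⟨LocalizedModule.map_injective S i h.injective, LocalizedModule.map_exact S i f h.exact,
    LocalizedModule.map_surjective S f h.surjective⟩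

theorem IsShortExact.quotSMulTop_map (h : IsShortExact i f) {a : B} (ha : IsSMulRegular M a) :
    IsShortExact (QuotSMulTop.map a i) (QuotSMulTop.map a f) where
  injective := by
    have zero_exact : Exact (0 : PUnit →ₗ[B] K) i :=
      LinearMap.exact_zero_iff_injective PUnit i |>.mpr h.injective
    have := QuotSMulTop.map_first_exact_on_four_term_exact_of_isSMulRegular_last
      zero_exact h.exact ha
    rwa [QuotSMulTop.map, LinearMap.map_zero, LinearMap.exact_zero_iff_injective] at this
  exact := QuotSMulTop.map_exact a h.exact h.surjective
  surjective := QuotSMulTop.map_surjective a h.surjective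

theorem IsShortExact.flat_of_lTensor_quotient_injective [Module.Flat B F] (h : IsShortExact i f)
    (hI : ∀ I : Ideal B, Injective (i.lTensor (B ⧸ I))) : Module.Flat B M := by
  rw [Module.Flat.iff_lTensor_injective']
  intro I
  exact lTensor_injective_of_exact_of_exact_of_rTensor_injective h.exact h.surjective
    (LinearMap.exact_subtype_mkQ I) (Submodule.mkQ_surjective _)
    ((LinearMap.lTensor_inj_iff_rTensor_inj _ _).mp (hI I))
    (Module.Flat.lTensor_preserves_injective_linearMap _ Subtype.val_injective)

theorem lTensor_injective_of_isShortExact [Module.Flat B F] {j : N₁ →ₗ[B] N₂} {g : N₂ →ₗ[B] N₃}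
    (h : IsShortExact j g) (h₁ : Injective (i.lTensor N₁)) (h₃ : Injective (i.lTensor N₃)) :
    Injective (i.lTensor N₂) := by
  rw [injective_iff_map_eq_zero]
  intro u hu
  have image_zero : g.rTensor K u = 0 := by
    apply h₃
    rw [map_zero, ← LinearMap.comp_apply, LinearMap.lTensor_comp_rTensor,
      ← LinearMap.rTensor_comp_lTensor, LinearMap.comp_apply, hu, map_zero]
  obtain ⟨w, rfl⟩ := (rTensor_exact K h.exact h.surjective u).mp image_zero
  have preimage_zero : i.lTensor N₁ w = 0 := by
    apply Module.Flat.rTensor_preserves_injective_linearMap (M := F) j h.injective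
    rw [map_zero, ← hu, ← LinearMap.comp_apply, LinearMap.rTensor_comp_lTensor,
      ← LinearMap.lTensor_comp_rTensor, LinearMap.comp_apply]
  rw [h₁ (preimage_zero.trans (map_zero _).symm), map_zero]

theorem lTensor_injective_of_injective [Module.Flat B K] {j : N₁ →ₗ[B] N₂} (hj : Injective j)
    (h : Injective (i.lTensor N₂)) : Injective (i.lTensor N₁) := by
  have comp_injective :=
    h.comp (Module.Flat.rTensor_preserves_injective_linearMap (M := K) j hj)
  rw [← LinearMap.coe_comp, LinearMap.lTensor_comp_rTensor, ← LinearMap.rTensor_comp_lTensor,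
    LinearMap.coe_comp] at comp_injective
  exact comp_injective.of_comp

theorem rTensor_injective_of_lTensor_injective [Module.Flat B F] {j : N₁ →ₗ[B] N₂}
    (hj : Injective j) (h : Injective (i.lTensor N₁)) : Injective (j.rTensor K) := by
  have comp_injective :=
    (Module.Flat.rTensor_preserves_injective_linearMap (M := F) j hj).comp h
  rw [← LinearMap.coe_comp, LinearMap.rTensor_comp_lTensor, ← LinearMap.lTensor_comp_rTensor,
    LinearMap.coe_comp] at comp_injective
  exact comp_injective.of_comp

theorem IsShortExact.flat_left [Module.Flat B F] [Module.Flat B M] (h : IsShortExact i f) :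
    Module.Flat B K := by
  rw [Module.Flat.iff_lTensor_injective']
  intro I
  rw [LinearMap.lTensor_inj_iff_rTensor_inj]
  exact rTensor_injective_of_lTensor_injective Subtype.val_injective
    (LinearMap.lTensor_injective_of_exact_of_flat f h.surjective i h.injective h.exact I)

theorem quotient_one_tmul_eq_zero_iff {I : Ideal B} {z : N} :
    (1 : B ⧸ I) ⊗ₜ[B] z = 0 ↔ z ∈ I • (⊤ : Submodule B N) := by
  rw [← (TensorProduct.quotTensorEquivQuotSMul N I).map_eq_zero_iff,
    ← map_one (Ideal.Quotient.mk I), TensorProduct.quotTensorEquivQuotSMul_mk_tmul, one_smul,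
    Submodule.Quotient.mk_eq_zero]

theorem lTensor_quotient_injective_iff {I : Ideal B} :
    Injective (i.lTensor (B ⧸ I)) ↔
      ∀ z, i z ∈ I • (⊤ : Submodule B F) → z ∈ I • (⊤ : Submodule B K) := by
  rw [injective_iff_map_eq_zero,
    (TensorProduct.mk_surjective B K (B ⧸ I) Ideal.Quotient.mk_surjective).forall]
  simp only [TensorProduct.mk_apply, LinearMap.lTensor_tmul, quotient_one_tmul_eq_zero_iff]

end ShortExact

section RegularSequence

open Function RingTheory.Sequence
open scoped Pointwise

variable {B M : Type*} [CommRing B] [AddCommGroup M] [Module B M]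

theorem mk_mem_ofList_smul_top_iff {a : B} {rs : List B} {z : M} :
    (Submodule.Quotient.mk z : QuotSMulTop a M) ∈ Ideal.ofList rs • (⊤ : Submodule B _) ↔
      z ∈ Ideal.ofList (a :: rs) • (⊤ : Submodule B M) := by
  rw [Ideal.ofList_cons_smul, ← Submodule.comap_map_mkQ, Submodule.mem_comap,
    Submodule.map_smul'', Submodule.map_top, Submodule.range_mkQ, Submodule.mkQ_apply]

theorem isWeaklyRegular_of_flat [Module.Flat B M] {rs : List B} (h : IsWeaklyRegular B rs) :
    IsWeaklyRegular M rs :=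
  ((TensorProduct.rid B M).isWeaklyRegular_congr rs).mp h.isWeaklyRegular_lTensor

theorem IsShortExact.mem_ofList_smul_top (rs : List B) :
    ∀ {K F M : Type*} [AddCommGroup K] [Module B K] [AddCommGroup F] [Module B F]
      [AddCommGroup M] [Module B M] {i : K →ₗ[B] F} {f : F →ₗ[B] M}, IsShortExact i f →
      IsWeaklyRegular M rs → ∀ {z : K}, i z ∈ Ideal.ofList rs • (⊤ : Submodule B F) →
        z ∈ Ideal.ofList rs • (⊤ : Submodule B K) := by
  induction rs with
  | nil =>
    intro K F M _ _ _ _ _ _ i f h _ z hz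
    simp only [Ideal.ofList_nil, Submodule.bot_smul, Submodule.mem_bot] at hz ⊢
    exact h.injective (hz.trans (map_zero i).symm)
  | cons a rs ih =>
    intro K F M _ _ _ _ _ _ i f h hM z hz
    rw [isWeaklyRegular_cons_iff] at hM
    rw [← mk_mem_ofList_smul_top_iff] at hz ⊢
    exact ih (h.quotSMulTop_map hM.1) hM.2 (by rwa [QuotSMulTop.map_apply_mk])

-- Depth increases by one when passing to a syzygy.
theorem IsShortExact.isWeaklyRegular_append_singleton (r : B) (rs : List B) :
    ∀ {K F M : Type*} [AddCommGroup K] [Module B K] [AddCommGroup F] [Module B F]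
      [AddCommGroup M] [Module B M] {i : K →ₗ[B] F} {f : F →ₗ[B] M}, IsShortExact i f →
      IsWeaklyRegular M rs → IsWeaklyRegular F (rs ++ [r]) → IsWeaklyRegular K (rs ++ [r]) := by
  induction rs with
  | nil =>
    intro K F M _ _ _ _ _ _ i f h _ hF
    rw [List.nil_append, isWeaklyRegular_singleton_iff] at hF ⊢
    exact hF.of_injective i h.injective
  | cons a rs ih =>
    intro K F M _ _ _ _ _ _ i f h hM hF
    rw [List.cons_append, isWeaklyRegular_cons_iff] at hF ⊢
    rw [isWeaklyRegular_cons_iff] at hM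
    exact ⟨hF.1.of_injective i h.injective, ih (h.quotSMulTop_map hM.1) hM.2 hF.2⟩

theorem IsShortExact.isWeaklyRegular_left {K F : Type*} [AddCommGroup K] [Module B K]
    [AddCommGroup F] [Module B F] {i : K →ₗ[B] F} {f : F →ₗ[B] M} (h : IsShortExact i f)
    {rs : List B} (hM : IsWeaklyRegular M rs) (hF : IsWeaklyRegular F rs) :
    IsWeaklyRegular K rs := by
  rcases List.eq_nil_or_concat rs with rfl | ⟨l, b, rfl⟩
  · exact IsWeaklyRegular.nil B K
  · rw [List.concat_eq_append] at hM hF ⊢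
    exact h.isWeaklyRegular_append_singleton b l ((isWeaklyRegular_append_iff M l [b]).mp hM).1 hF

end RegularSequence

/-! ### Flat dimension -/

section FlatDimension

open Function RingTheory.Sequence

variable {B : Type u} [CommRing B]

/-- The module `M` has flat dimension at most `n`, i.e. a flat resolution of length `n`. -/
def HasFlatDimLE (B : Type u) [CommRing B] :
    ℕ → ∀ (M : Type u) [AddCommGroup M] [Module B M], Prop
  | 0, M, _, _ => Module.Flat B M
  | n + 1, M, _, _ => ∃ (K F : Type u) (_ : AddCommGroup K) (_ : Module B K)
      (_ : AddCommGroup F) (_ : Module B F) (i : K →ₗ[B] F) (f : F →ₗ[B] M),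
      Module.Flat B F ∧ IsShortExact i f ∧ HasFlatDimLE B n K

theorem HasFlatDimLE.of_ker {n : ℕ} {F M : Type u} [AddCommGroup F] [Module B F]
    [AddCommGroup M] [Module B M] [Module.Flat B F] {f : F →ₗ[B] M} (hf : Surjective f)
    (h : HasFlatDimLE B n (LinearMap.ker f)) : HasFlatDimLE B (n + 1) M :=
  ⟨_, F, _, _, _, _, _, f, inferInstance, isShortExact_ker_subtype hf, h⟩

theorem HasFlatDimLE.of_linearEquiv {n : ℕ} {M N : Type u} [AddCommGroup M] [Module B M]
    [AddCommGroup N] [Module B N] (e : M ≃ₗ[B] N) (h : HasFlatDimLE B n M) :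
    HasFlatDimLE B n N := by
  cases n with
  | zero =>
    have : Module.Flat B M := h
    exact Module.Flat.of_linearEquiv e.symm
  | succ n =>
    obtain ⟨K, F, _, _, _, _, i, f, hF, hex, hK⟩ := h
    exact ⟨K, F, _, _, _, _, i, e.toLinearMap ∘ₗ f, hF,
      ⟨hex.injective, LinearMap.exact_iff.mpr (by rw [e.ker_comp, hex.exact.linearMap_ker_eq]),
        e.surjective.comp hex.surjective⟩, hK⟩

theorem HasFlatDimLE.localizedModule (S : Submonoid B) {n : ℕ} :
    ∀ {M : Type u} [AddCommGroup M] [Module B M], HasFlatDimLE B n M →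
      HasFlatDimLE (Localization S) n (LocalizedModule S M) := by
  induction n with
  | zero =>
    intro M _ _ (h : Module.Flat B M)
    exact Module.Flat.localizedModule S
  | succ n ih =>
    rintro M _ _ ⟨K, F, _, _, _, _, i, f, hF, hex, hK⟩
    exact ⟨LocalizedModule S K, LocalizedModule S F, inferInstance, inferInstance, inferInstance,
      inferInstance, _, _, Module.Flat.localizedModule S, hex.localizedModule_map S, ih hK⟩

/-- The vanishing of `Tor₁ (N, M)`: tensoring with `N` preserves injectivity of the kernel of
every surjection onto `M` from a flat module. -/
def TorOneVanishes (B : Type u) [CommRing B] (N M : Type u) [AddCommGroup N] [Module B N]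
    [AddCommGroup M] [Module B M] : Prop :=
  ∀ (K F : Type u) [AddCommGroup K] [Module B K] [AddCommGroup F] [Module B F]
    (i : K →ₗ[B] F) (f : F →ₗ[B] M), Module.Flat B F → IsShortExact i f →
    Injective (i.lTensor N)

-- Both sides compute `Tor₂ (N, M)`.
theorem TorOneVanishes.shift {K F M Z G N : Type u} [AddCommGroup K] [Module B K]
    [AddCommGroup F] [Module B F] [AddCommGroup M] [Module B M] [AddCommGroup Z] [Module B Z]
    [AddCommGroup G] [Module B G] [AddCommGroup N] [Module B N] [Module.Flat B F]
    [Module.Flat B G] {i : K →ₗ[B] F} {f : F →ₗ[B] M} {j : Z →ₗ[B] G} {g : G →ₗ[B] N}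
    (hM : IsShortExact i f) (hN : IsShortExact j g) (h : TorOneVanishes B Z M) :
    TorOneVanishes B N K := fun _ _ _ _ _ _ _ _ _ hK =>
  lTensor_injective_of_exact_of_exact_of_rTensor_injective hN.exact hN.surjective hK.exact
    hK.surjective
    (rTensor_injective_of_lTensor_injective hN.injective (h K F i f inferInstance hM))
    (Module.Flat.lTensor_preserves_injective_linearMap _ hK.injective)

theorem hasFlatDimLE_of_torOneVanishes {n : ℕ} (H : ∀ I : Ideal B, HasFlatDimLE B n (B ⧸ I))
    (m : ℕ) : ∀ j, m + j = n → ∀ (M : Type u) [AddCommGroup M] [Module B M],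
      (∀ (N : Type u) [AddCommGroup N] [Module B N], HasFlatDimLE B j N → TorOneVanishes B N M) →
      HasFlatDimLE B m M := by
  induction m with
  | zero =>
    rintro j hj M _ _ hM
    obtain rfl : j = n := by omega
    have hex := isShortExact_ker_subtype (Finsupp.linearCombination_id_surjective B M)
    exact hex.flat_of_lTensor_quotient_injective
      fun I => hM _ (H I) _ _ _ _ inferInstance hex
  | succ m ih =>
    rintro j hj M _ _ hM
    have hsurj := Finsupp.linearCombination_id_surjective B M
    refine HasFlatDimLE.of_ker hsurj (ih (j + 1) (by omega) _ ?_)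
    rintro N _ _ ⟨Z, G, _, _, _, _, _, _, hG, hN, hZ⟩
    exact (hM Z hZ).shift (isShortExact_ker_subtype hsurj) hN

theorem hasFlatDimLE_of_forall_quotient {n : ℕ} (H : ∀ I : Ideal B, HasFlatDimLE B n (B ⧸ I))
    (M : Type u) [AddCommGroup M] [Module B M] : HasFlatDimLE B n M := by
  refine hasFlatDimLE_of_torOneVanishes H n 0 rfl M ?_
  intro N _ _ (hN : Module.Flat B N) K F _ _ _ _ i f _ hex
  exact Module.Flat.lTensor_preserves_injective_linearMap _ hex.injective

variable [IsNoetherianRing B] [IsLocalRing B]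

theorem flat_of_isWeaklyRegular_of_ofList_eq_maximalIdeal {N : Type u} [AddCommGroup N]
    [Module B N] [Module.Finite B N] {rs : List B} (hm : Ideal.ofList rs = maximalIdeal B)
    (hN : IsWeaklyRegular N rs) : Module.Flat B N := by
  obtain ⟨n, f, hf⟩ := Module.Finite.exists_fin' B N
  have hex := isShortExact_ker_subtype hf
  have residue_injective :
      Injective ((LinearMap.ker f).subtype.lTensor (B ⧸ Ideal.ofList rs)) :=
    lTensor_quotient_injective_iff.mpr fun z => hex.mem_ofList_smul_top rs hN
  rw [hm] at residue_injective
  have : Module.Free B N := Module.free_of_lTensor_residueField_injective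
    (LinearMap.ker f).subtype f hf hex.exact residue_injective
  infer_instance

theorem hasFlatDimLE_of_isWeaklyRegular_append {rs : List B} (hrs : IsWeaklyRegular B rs)
    (hm : Ideal.ofList rs = maximalIdeal B) (l₂ : List B) :
    ∀ l₁ : List B, rs = l₁ ++ l₂ → ∀ (N : Type u) [AddCommGroup N] [Module B N]
      [Module.Finite B N], IsWeaklyRegular N l₁ → HasFlatDimLE B l₂.length N := by
  induction l₂ with
  | nil =>
    rintro l₁ rfl N _ _ _ hN
    rw [List.append_nil] at hm
    exact flat_of_isWeaklyRegular_of_ofList_eq_maximalIdeal hm hN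
  | cons r l₂ ih =>
    intro l₁ hl N _ _ _ hN
    obtain ⟨n, f, hf⟩ := Module.Finite.exists_fin' B N
    have hl' : rs = (l₁ ++ [r]) ++ l₂ := by rw [hl, List.append_assoc, List.singleton_append]
    refine HasFlatDimLE.of_ker hf (ih (l₁ ++ [r]) hl' _ ?_)
    rw [hl', isWeaklyRegular_append_iff] at hrs
    exact (isShortExact_ker_subtype hf).isWeaklyRegular_append_singleton r l₁ hN
      (isWeaklyRegular_of_flat hrs.1)

theorem hasFlatDimLE_length_of_ofList_eq_maximalIdeal {rs : List B}
    (hrs : IsWeaklyRegular B rs) (hm : Ideal.ofList rs = maximalIdeal B)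
    (M : Type u) [AddCommGroup M] [Module B M] : HasFlatDimLE B rs.length M :=
  hasFlatDimLE_of_forall_quotient
    (fun _ => hasFlatDimLE_of_isWeaklyRegular_append hrs hm rs [] rfl _
      (IsWeaklyRegular.nil _ _)) M

end FlatDimension

/-! ### A flatness criterion -/

section FlatnessCriterion

open Function RingTheory.Sequence

theorem mem_maximalIdeal_of_isRegular {B : Type*} [CommRing B] [IsLocalRing B] {rs : List B}
    (h : IsRegular B rs) {r : B} (hr : r ∈ rs) : r ∈ maximalIdeal B := by
  have ne_top : Ideal.ofList rs ≠ ⊤ := fun htop =>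
    h.top_ne_smul (by rw [htop, smul_eq_mul, Ideal.top_mul])
  exact le_maximalIdeal ne_top (Ideal.subset_span hr)

theorem isRegular_append_singleton {B : Type*} [CommRing B] [IsLocalRing B] {rs : List B}
    (h : IsRegular B rs) {r : B} (hr : r ∈ maximalIdeal B)
    (hreg : IsSMulRegular (B ⧸ Ideal.ofList rs) r) : IsRegular B (rs ++ [r]) := by
  refine .of_isWeaklyRegular_of_mem_maximalIdeal B (fun s hs => ?_) ?_
  · rcases List.mem_append.mp hs with hs | hs
    · exact mem_maximalIdeal_of_isRegular h hs
    · rwa [List.mem_singleton.mp hs]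
  · rw [isWeaklyRegular_append_iff, isWeaklyRegular_singleton_iff, smul_eq_mul, Ideal.mul_top]
    exact ⟨h.toIsWeaklyRegular, hreg⟩

theorem exists_isRegular_forall_not_isSMulRegular (B : Type*) [CommRing B] [IsNoetherianRing B]
    [IsLocalRing B] : ∃ rs : List B, IsRegular B rs ∧
      ∀ r ∈ maximalIdeal B, ¬ IsSMulRegular (B ⧸ Ideal.ofList rs) r := by
  obtain ⟨_, ⟨rs, hrs, rfl⟩, hmax⟩ := set_has_maximal_iff_noetherian.mpr
    (inferInstanceAs (IsNoetherian B B)) {I | ∃ rs : List B, IsRegular B rs ∧ I = Ideal.ofList rs}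
    ⟨_, [], IsRegular.nil _ _, rfl⟩
  refine ⟨rs, hrs, fun r hr hreg => ?_⟩
  have r_mem : r ∈ Ideal.ofList rs := by
    by_contra hn
    refine hmax _ ⟨_, isRegular_append_singleton hrs hr hreg, rfl⟩ ?_
    rw [Ideal.ofList_append, Ideal.ofList_singleton]
    refine lt_of_le_of_ne le_sup_left fun h => hn ?_
    rw [h]
    exact Ideal.mem_sup_right (Ideal.mem_span_singleton_self r)
  have one_mem : (1 : B) ∈ Ideal.ofList rs :=
    mem_of_isSMulRegular_quotient_of_smul_mem hreg (by rwa [smul_eq_mul, mul_one])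
  exact hrs.top_ne_smul
    (by rw [(Ideal.eq_top_iff_one _).mpr one_mem, smul_eq_mul, Ideal.top_mul])

theorem exists_residue_injective_of_forall_not_isSMulRegular {B N : Type*} [CommRing B]
    [IsNoetherianRing B] [IsLocalRing B] [AddCommGroup N] [Module B N] [Module.Finite B N]
    (h : ∀ r ∈ maximalIdeal B, ¬ IsSMulRegular N r) :
    ∃ f : (B ⧸ maximalIdeal B) →ₗ[B] N, Injective f := by
  have subset_union : (maximalIdeal B : Set B) ⊆ ⋃ P ∈ associatedPrimes B N, P := by
    rw [biUnion_associatedPrimes_eq_compl_regular]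
    exact h
  obtain ⟨P, hP, hle⟩ := ((maximalIdeal B).subset_union_prime_finite
    (associatedPrimes.finite B N) (f := id) 0 0 fun _ h _ _ ↦ h.isPrime).1 subset_union
  obtain rfl := (maximalIdeal.isMaximal B).eq_of_le hP.isPrime.ne_top hle
  exact ((isAssociatedPrime_iff_exists_injective_linearMap _ _).mp hP).2

variable {B : Type*} [CommRing B] {K F M : Type*} [AddCommGroup K] [Module B K]
  [AddCommGroup F] [Module B F] [AddCommGroup M] [Module B M] {i : K →ₗ[B] F} {f : F →ₗ[B] M}

theorem isSMulRegular_quotient_smul_top_of_flat [Module.Flat B K] {I : Ideal B} {s : B}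
    (hs : IsSMulRegular (B ⧸ I) s) : IsSMulRegular (K ⧸ (I • (⊤ : Submodule B K))) s := by
  rw [← (TensorProduct.quotTensorEquivQuotSMul K I).isSMulRegular_congr]
  exact hs.rTensor K

theorem isSMulRegular_quotient_of_notMem {Q : Ideal B} [Q.IsPrime] {s : B} (hs : s ∉ Q) :
    IsSMulRegular (B ⧸ Q) s :=
  (isSMulRegular_quotient_iff_mem_of_smul_mem _ _).mpr fun _ hx =>
    (Ideal.IsPrime.mem_or_mem ‹_› hx).resolve_left hs

theorem mem_smul_top_of_mkLinearMap_mem_smul_top [Module.Flat B K] (Q : Ideal B) [Q.IsPrime]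
    {z : K} (hz : LocalizedModule.mkLinearMap Q.primeCompl K z ∈
      Q • (⊤ : Submodule B (LocalizedModule Q.primeCompl K))) :
    z ∈ Q • (⊤ : Submodule B K) := by
  have smul_top_le : Q • (⊤ : Submodule B (LocalizedModule Q.primeCompl K)) ≤
      (Q • (⊤ : Submodule B K)).localized₀ Q.primeCompl
        (LocalizedModule.mkLinearMap Q.primeCompl K) := by
    rw [Submodule.smul_le]
    intro q hq w _
    obtain ⟨⟨k, s⟩, rfl⟩ := IsLocalizedModule.mk'_surjective Q.primeCompl
      (LocalizedModule.mkLinearMap Q.primeCompl K) w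
    exact ⟨q • k, Submodule.smul_mem_smul hq trivial, s, IsLocalizedModule.mk'_smul ..⟩
  obtain ⟨w, hw, s, hs⟩ := smul_top_le hz
  rw [IsLocalizedModule.mk'_eq_iff, ← LinearMap.map_smul_of_tower,
    IsLocalizedModule.eq_iff_exists Q.primeCompl] at hs
  obtain ⟨c, hc⟩ := hs
  have smul_mem : (c * s : B) • z ∈ Q • (⊤ : Submodule B K) := by
    rw [mul_smul]
    exact hc ▸ Submodule.smul_mem _ (c : B) hw
  exact mem_of_isSMulRegular_quotient_of_smul_mem (isSMulRegular_quotient_smul_top_of_flat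
    (isSMulRegular_quotient_of_notMem (c * s).2)) smul_mem

theorem IsShortExact.isLocalizedModule_map (h : IsShortExact i f) (S : Submonoid B) :
    IsShortExact
      (IsLocalizedModule.map S (LocalizedModule.mkLinearMap S K)
        (LocalizedModule.mkLinearMap S F) i)
      (IsLocalizedModule.map S (LocalizedModule.mkLinearMap S F)
        (LocalizedModule.mkLinearMap S M) f) :=
  ⟨IsLocalizedModule.map_injective S _ _ i h.injective,
    IsLocalizedModule.map_exact S _ _ _ i f h.exact,
    IsLocalizedModule.map_surjective S _ _ f h.surjective⟩

theorem IsShortExact.lTensor_quotient_injective_of_flat_localizedModule [Module.Flat B K]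
    (h : IsShortExact i f) (Q : Ideal B) [Q.IsPrime]
    [Module.Flat B (LocalizedModule Q.primeCompl M)] : Injective (i.lTensor (B ⧸ Q)) := by
  rw [lTensor_quotient_injective_iff]
  intro z hz
  have hloc := h.isLocalizedModule_map Q.primeCompl
  apply mem_smul_top_of_mkLinearMap_mem_smul_top Q
  refine lTensor_quotient_injective_iff.mp (LinearMap.lTensor_injective_of_exact_of_flat _
    hloc.surjective _ hloc.injective hloc.exact (B ⧸ Q)) _ ?_
  rw [IsLocalizedModule.map_apply]
  have image_mem := Submodule.mem_map_of_mem (f := LocalizedModule.mkLinearMap Q.primeCompl F) hz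
  rw [Submodule.map_smul''] at image_mem
  exact Submodule.smul_mono le_rfl le_top image_mem

theorem flat_localizedModule_of_flat [Module.Flat B M] (S : Submonoid B) :
    Module.Flat B (LocalizedModule S M) :=
  have := Module.Flat.localizedModule (M := M) S
  (Module.flat_iff_of_isLocalization (R := B) (Localization S) S _).mp inferInstance

variable [IsNoetherianRing B]

theorem lTensor_injective_of_forall_prime [Module.Flat B F] [Module.Flat B K]
    (hprime : ∀ (Q : Ideal B) [Q.IsPrime], Injective (i.lTensor (B ⧸ Q)))
    (N : Type*) [AddCommGroup N] [Module B N] [hN : Module.Finite B N] :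
    Injective (i.lTensor N) := by
  induction hN using IsNoetherianRing.induction_on_isQuotientEquivQuotientPrime B with
  | subsingleton N => exact injective_of_subsingleton _
  | quotient N Q e => exact lTensor_injective_of_injective e.injective (hprime Q.1)
  | exact N₁ N₂ N₃ j g hj hg hjg h₁ h₃ =>
    exact lTensor_injective_of_isShortExact ⟨hj, hjg, hg⟩ h₁ h₃

variable [IsLocalRing B]

theorem IsShortExact.lTensor_residue_injective [Module.Flat B K] (h : IsShortExact i f)
    (hreg : ∀ rs : List B, IsRegular B rs → IsWeaklyRegular M rs) :
    Injective (i.lTensor (B ⧸ maximalIdeal B)) := by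
  obtain ⟨rs, hrs, hsocle⟩ := exists_isRegular_forall_not_isSMulRegular B
  obtain ⟨j, hj⟩ := exists_residue_injective_of_forall_not_isSMulRegular hsocle
  exact lTensor_injective_of_injective hj
    (lTensor_quotient_injective_iff.mpr fun _ => h.mem_ofList_smul_top rs (hreg rs hrs))

theorem IsShortExact.flat_of_flat_left [Module.Flat B F] [Module.Flat B K]
    (h : IsShortExact i f) (hreg : ∀ rs : List B, IsRegular B rs → IsWeaklyRegular M rs)
    (hloc : ∀ (Q : Ideal B) [Q.IsPrime], Q ≠ maximalIdeal B →
      Module.Flat B (LocalizedModule Q.primeCompl M)) : Module.Flat B M := by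
  refine h.flat_of_lTensor_quotient_injective fun I =>
    lTensor_injective_of_forall_prime (fun Q _ => ?_) _
  by_cases hQ : Q = maximalIdeal B
  · exact hQ ▸ h.lTensor_residue_injective hreg
  · have := hloc Q hQ
    exact h.lTensor_quotient_injective_of_flat_localizedModule Q

theorem HasFlatDimLE.flat_of_isWeaklyRegular {B : Type u} [CommRing B] [IsNoetherianRing B]
    [IsLocalRing B] {n : ℕ} :
    ∀ {M : Type u} [AddCommGroup M] [Module B M], HasFlatDimLE B n M →
      (∀ rs : List B, IsRegular B rs → IsWeaklyRegular M rs) →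
      (∀ (Q : Ideal B) [Q.IsPrime], Q ≠ maximalIdeal B →
        Module.Flat B (LocalizedModule Q.primeCompl M)) → Module.Flat B M := by
  induction n with
  | zero => exact fun h _ _ => h
  | succ n ih =>
    rintro M _ _ ⟨K, F, _, _, _, _, i, f, hF, hex, hK⟩ hreg hloc
    have : Module.Flat B K := by
      refine ih hK (fun rs hrs => ?_) fun Q _ hQ => ?_
      · exact hex.isWeaklyRegular_left (hreg rs hrs) (isWeaklyRegular_of_flat hrs.1)
      · have := hloc Q hQ
        have := flat_localizedModule_of_flat (M := F) Q.primeCompl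
        exact (hex.isLocalizedModule_map Q.primeCompl).flat_left
    exact hex.flat_of_flat_left hreg hloc

end FlatnessCriterion

/-! ### Colons by powers of a regular sequence -/

section Colon

open Function RingTheory.Sequence

section PowersOfRegularSequences

variable {B M : Type*} [CommRing B] [AddCommGroup M] [Module B M]

theorem mem_ofList_smul_top_of_smul_mem {l : List B} {c : B}
    (h : IsWeaklyRegular M (l ++ [c])) {x : M}
    (hx : c • x ∈ Ideal.ofList l • (⊤ : Submodule B M)) :
    x ∈ Ideal.ofList l • (⊤ : Submodule B M) := by
  rw [isWeaklyRegular_append_iff, isWeaklyRegular_singleton_iff] at h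
  exact mem_of_isSMulRegular_quotient_of_smul_mem h.2 hx

variable [IsLocalRing B]

theorem isRegular_of_append_left {l l' : List B} (h : IsRegular B (l ++ l')) : IsRegular B l :=
  .of_isWeaklyRegular_of_mem_maximalIdeal B
    (fun _ hr => mem_maximalIdeal_of_isRegular h (List.mem_append_left _ hr))
    ((isWeaklyRegular_append_iff _ _ _).mp h.1).1

variable [IsNoetherianRing B]

theorem isRegular_pow_cons {l : List B} {a : B} (h : IsRegular B (a :: l)) {k : ℕ} (hk : 0 < k) :
    IsRegular B (a ^ k :: l) := by
  have append_a : IsRegular B (l ++ [a]) :=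
    isRegular_of_perm h (List.perm_append_singleton a l).symm
  have a_regular := ((isWeaklyRegular_append_iff _ _ _).mp append_a.1).2
  rw [isWeaklyRegular_singleton_iff, smul_eq_mul, Ideal.mul_top] at a_regular
  have append_pow : IsRegular B (l ++ [a ^ k]) :=
    isRegular_append_singleton (isRegular_of_append_left append_a)
      (Ideal.pow_mem_of_mem _ (mem_maximalIdeal_of_isRegular h List.mem_cons_self) _ hk)
      (a_regular.pow k)
  exact isRegular_of_perm append_pow (List.perm_append_singleton _ l)

theorem isRegular_map_pow_append {k : ℕ} (hk : 0 < k) (l : List B) :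
    ∀ {C : List B}, IsRegular B (l ++ C) → IsRegular B (l.map (· ^ k) ++ C) := by
  induction l with
  | nil => exact id
  | cons a l ih =>
    intro C h
    have a_moved : IsRegular B (l ++ (a :: C)) := isRegular_of_perm h List.perm_middle.symm
    exact isRegular_pow_cons (isRegular_of_perm (ih a_moved) List.perm_middle) hk

end PowersOfRegularSequences

/-- The ideal `(a₁^q, …, aₘ^q, c₁, …, cₗ)` for lists `as = [a₁, …, aₘ]` and `C = [c₁, …, cₗ]`. -/
def powIdeal {B : Type*} [CommRing B] (as C : List B) (q : ℕ) : Ideal B :=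
  Ideal.ofList (as.map (· ^ q) ++ C)

section PowIdeal

variable {B M : Type*} [CommRing B] [AddCommGroup M] [Module B M]

theorem powIdeal_cons_left (a : B) (as C : List B) (q : ℕ) :
    powIdeal (a :: as) C q = Ideal.span {a ^ q} ⊔ powIdeal as C q := by
  rw [powIdeal, List.map_cons, List.cons_append, Ideal.ofList_cons, powIdeal]

theorem powIdeal_cons_right (as : List B) (c : B) (C : List B) (q : ℕ) :
    powIdeal as (c :: C) q = Ideal.span {c} ⊔ powIdeal as C q := by
  simp only [powIdeal, Ideal.ofList_append, Ideal.ofList_cons, sup_left_comm]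

theorem mem_span_singleton_sup_smul_iff {a : B} {I : Ideal B} {S : Submodule B M} {x : M} :
    x ∈ (Ideal.span {a} ⊔ I) • S ↔ ∃ y ∈ S, x - a • y ∈ I • S := by
  rw [Submodule.sup_smul, Submodule.ideal_span_singleton_smul, Submodule.mem_sup]
  constructor
  · rintro ⟨_, ⟨y, hy, rfl⟩, z, hz, rfl⟩
    refine ⟨y, hy, ?_⟩
    rw [show a • y = DistribSMul.toLinearMap B M a y from rfl, add_sub_cancel_left]
    exact hz
  · rintro ⟨y, hy, hz⟩
    exact ⟨a • y, ⟨y, hy, rfl⟩, _, hz, add_sub_cancel _ _⟩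

theorem prod_pow_smul_mem_powIdeal_smul_top {as C : List B} {q q' : ℕ} (hq : q' ≤ q) {x : M}
    (hx : x ∈ powIdeal as C q' • (⊤ : Submodule B M)) :
    as.prod ^ (q - q') • x ∈ powIdeal as C q • (⊤ : Submodule B M) := by
  have mul_mem : powIdeal as C q' ≤
      Submodule.comap (LinearMap.mulLeft B (as.prod ^ (q - q'))) (powIdeal as C q) := by
    refine Ideal.span_le.mpr fun r hr => ?_
    change as.prod ^ (q - q') * r ∈ powIdeal as C q
    rcases List.mem_append.mp hr with h | h
    · obtain ⟨a, ha, rfl⟩ := List.mem_map.mp h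
      obtain ⟨b, hb⟩ := List.dvd_prod ha
      have pow_mem : a ^ q ∈ powIdeal as C q :=
        Ideal.subset_span (List.mem_append_left _ (List.mem_map.mpr ⟨a, ha, rfl⟩))
      have : as.prod ^ (q - q') * a ^ q' = b ^ (q - q') * a ^ q := by
        rw [hb, ← Nat.sub_add_cancel hq, pow_add a, Nat.add_sub_cancel]
        ring
      exact this ▸ Ideal.mul_mem_left _ _ pow_mem
    · exact Ideal.mul_mem_left _ _ (Ideal.subset_span (List.mem_append_right _ h))
  induction hx using Submodule.smul_induction_on' with
  | smul r hr n hn =>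
    rw [← mul_smul]
    exact Submodule.smul_mem_smul (mul_mem hr) trivial
  | add x _ y _ hx hy => exact smul_add (as.prod ^ (q - q')) x y ▸ add_mem hx hy

end PowIdeal

section ColonControl

variable {B M : Type*} [CommRing B] [AddCommGroup M] [Module B M]

/-- Linear relations `L q ⊆ M × M` which transport the elements of the colons
`(as^q, C)S : t^q` into one submodule `W`, uniformly in `q`, and whose kernels lie in
`(as^q, C)M`. -/
structure ColonControl (as C : List B) (t : B) (S W : Submodule B M)
    (L : ℕ → Submodule B (M × M)) : Prop where
  exists_rel : ∀ q > 0, ∀ v ∈ S, t ^ q • v ∈ powIdeal as C q • S → ∃ w ∈ W, (v, w) ∈ L q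
  mem_of_rel_zero : ∀ q > 0, ∀ v, (v, 0) ∈ L q → v ∈ powIdeal as C q • (⊤ : Submodule B M)
  rel_smul : ∀ q q', q' ≤ q → ∀ v w, (v, w) ∈ L q' → (as.prod ^ (q - q') • v, w) ∈ L q

theorem colonControl_nil (C : List B) (t : B) (S : Submodule B M) :
    ColonControl [] C t S S fun _ => (Ideal.ofList C • (⊤ : Submodule B M)).comap
      (LinearMap.fst B M M - LinearMap.snd B M M) where
  exists_rel _ _ v hv _ := ⟨v, hv, by simp⟩
  mem_of_rel_zero _ _ v hv := by simpa [powIdeal] using hv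
  rel_smul _ _ _ v w h := by simpa using h

/-- The composite of the relation `L` with the relation `c v ≡ a f mod D` between `v` and `f`. -/
def compRel (c a : B) (D : Submodule B M) (L : Submodule B (M × M)) : Submodule B (M × M) where
  carrier := {x | ∃ f, (f, x.2) ∈ L ∧ c • x.1 - a • f ∈ D}
  zero_mem' := ⟨0, L.zero_mem, by simp⟩
  add_mem' := by
    rintro _ _ ⟨f, hf, hfD⟩ ⟨g, hg, hgD⟩
    refine ⟨f + g, L.add_mem hf hg, ?_⟩
    convert D.add_mem hfD hgD using 1
    simp only [Prod.fst_add, smul_add]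
    abel
  smul_mem' := by
    rintro b _ ⟨f, hf, hfD⟩
    refine ⟨b • f, L.smul_mem b hf, ?_⟩
    convert D.smul_mem b hfD using 1
    rw [Prod.smul_fst, smul_sub, smul_comm c b, smul_comm a b]

variable {as C : List B} {a c : B} {S W : Submodule B M} {L : ℕ → Submodule B (M × M)}

theorem ColonControl.exists_compRel (h : ColonControl as (c :: C) a S W L) {q : ℕ} (hq : 0 < q)
    {v : M} (hv : v ∈ S) (hcv : c • v ∈ powIdeal (a :: as) C q • S) :
    ∃ w ∈ W, (v, w) ∈ compRel c (a ^ q) (powIdeal as C q • ⊤) (L q) := by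
  rw [powIdeal_cons_left, mem_span_singleton_sup_smul_iff] at hcv
  obtain ⟨f, hf, hcvf⟩ := hcv
  have smul_f_mem : a ^ q • f ∈ powIdeal as (c :: C) q • S := by
    rw [powIdeal_cons_right, mem_span_singleton_sup_smul_iff]
    exact ⟨v, hv, neg_sub (c • v) (a ^ q • f) ▸ neg_mem hcvf⟩
  obtain ⟨w, hw, hwL⟩ := h.exists_rel q hq f hf smul_f_mem
  exact ⟨w, hw, f, hwL, Submodule.smul_mono le_rfl le_top hcvf⟩

theorem ColonControl.mem_of_compRel_zero (h : ColonControl as (c :: C) a S W L) {q : ℕ}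
    (hq : 0 < q) (hreg : IsWeaklyRegular M (as.map (· ^ q) ++ C ++ [c])) {v : M}
    (hv : (v, 0) ∈ compRel c (a ^ q) (powIdeal as C q • ⊤) (L q)) :
    v ∈ powIdeal (a :: as) C q • (⊤ : Submodule B M) := by
  obtain ⟨f, hf, hcvf⟩ := hv
  have f_mem := h.mem_of_rel_zero q hq f hf
  rw [powIdeal_cons_right, mem_span_singleton_sup_smul_iff] at f_mem
  obtain ⟨g, -, hfg⟩ := f_mem
  rw [powIdeal_cons_left, mem_span_singleton_sup_smul_iff]
  refine ⟨g, trivial, mem_ofList_smul_top_of_smul_mem hreg ?_⟩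
  have : c • (v - a ^ q • g) = (c • v - a ^ q • f) + a ^ q • (f - c • g) := by
    rw [smul_sub, smul_sub, smul_comm c (a ^ q) g]
    abel
  exact this ▸ add_mem hcvf (Submodule.smul_mem _ _ hfg)

theorem ColonControl.compRel_smul (h : ColonControl as (c :: C) a S W L) {q q' : ℕ}
    (hqq : q' ≤ q) {v w : M} (hvw : (v, w) ∈ compRel c (a ^ q') (powIdeal as C q' • ⊤) (L q')) :
    ((a :: as).prod ^ (q - q') • v, w) ∈ compRel c (a ^ q) (powIdeal as C q • ⊤) (L q) := by
  obtain ⟨f, hf, hcvf⟩ := hvw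
  refine ⟨as.prod ^ (q - q') • f, h.rel_smul q q' hqq f w hf, ?_⟩
  have : c • (a :: as).prod ^ (q - q') • v - a ^ q • as.prod ^ (q - q') • f =
      a ^ (q - q') • as.prod ^ (q - q') • (c • v - a ^ q' • f) := by
    rw [show a ^ q = a ^ (q - q') * a ^ q' by rw [← pow_add, Nat.sub_add_cancel hqq],
      List.prod_cons, mul_pow]
    module
  exact this ▸ Submodule.smul_mem _ _ (prod_pow_smul_mem_powIdeal_smul_top hqq hcvf)

theorem smul_mem_smul_range_of_factorization {F : Type*} [AddCommGroup F] [Module B F]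
    [Module.Flat B F] {l : List B} {b : B} (hreg : IsWeaklyRegular B (l ++ [b]))
    {φ : S →ₗ[B] F} {ψ : F →ₗ[B] M} (hφψ : ∀ s : S, ψ (φ s) = c • (s : M)) {v : M} (hv : v ∈ S)
    (hbv : b • v ∈ Ideal.ofList l • S) : c • v ∈ Ideal.ofList l • LinearMap.range ψ := by
  have smul_mem : b • (⟨v, hv⟩ : S) ∈ Ideal.ofList l • (⊤ : Submodule B S) := by
    have map_subtype :
        (Ideal.ofList l • (⊤ : Submodule B S)).map S.subtype = Ideal.ofList l • S := by
      rw [Submodule.map_smul'', Submodule.map_subtype_top]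
    obtain ⟨y, hy, hyv⟩ := map_subtype.symm ▸ hbv
    exact (Subtype.ext hyv : y = b • ⟨v, hv⟩) ▸ hy
  have φ_mem : φ ⟨v, hv⟩ ∈ Ideal.ofList l • (⊤ : Submodule B F) := by
    refine mem_ofList_smul_top_of_smul_mem (isWeaklyRegular_of_flat hreg) ?_
    have := Submodule.mem_map_of_mem (f := φ) smul_mem
    rw [Submodule.map_smul'', map_smul] at this
    exact Submodule.smul_mono le_rfl le_top this
  have := Submodule.mem_map_of_mem (f := ψ) φ_mem
  rwa [Submodule.map_smul'', hφψ, Submodule.map_top] at this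

/-- For every finitely generated submodule `S` of `M` and every `t` in the maximal ideal,
multiplication by some positive power of `t`, as a map `S → M`, factors through a finite free
module. -/
def PowSMulFactorsThroughFree (B M : Type*) [CommRing B] [IsLocalRing B] [AddCommGroup M]
    [Module B M] : Prop :=
  ∀ S : Submodule B M, S.FG → ∀ t ∈ maximalIdeal B, ∃ (N r : ℕ) (φ : S →ₗ[B] (Fin r → B))
    (ψ : (Fin r → B) →ₗ[B] M), ∀ s : S, ψ (φ s) = t ^ (N + 1) • (s : M)

theorem exists_colonControl [IsLocalRing B] [IsNoetherianRing B]
    (hfree : PowSMulFactorsThroughFree B M) {n : ℕ}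
    (hM : ∀ l : List B, IsRegular B l → l.length ≤ n → IsWeaklyRegular M l) (as : List B) :
    ∀ (C : List B) (t : B) (S : Submodule B M), S.FG → IsRegular B (t :: (as ++ C)) →
      as.length + C.length ≤ n →
      ∃ (W : Submodule B M) (L : ℕ → Submodule B (M × M)), W.FG ∧ ColonControl as C t S W L := by
  induction as with
  | nil => exact fun C t S hS _ _ => ⟨S, _, hS, colonControl_nil C t S⟩
  | cons a as ih =>
    intro C t S hS hreg hlen
    obtain ⟨N, r, φ, ψ, hφψ⟩ :=
      hfree S hS t (mem_maximalIdeal_of_isRegular hreg List.mem_cons_self)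
    have c_regular : IsRegular B (a :: (as ++ t ^ (N + 1) :: C)) :=
      isRegular_of_perm (isRegular_pow_cons hreg N.succ_pos)
        ((List.Perm.swap a _ _).trans (List.perm_middle.symm.cons a))
    have range_sup_fg : (LinearMap.range ψ ⊔ S).FG :=
      (LinearMap.range_eq_map ψ ▸ Module.Finite.fg_top.map ψ : (LinearMap.range ψ).FG).sup hS
    obtain ⟨W, L, hW, hL⟩ := ih (t ^ (N + 1) :: C) a (LinearMap.range ψ ⊔ S) range_sup_fg c_regular
      (by simp only [List.length_cons] at hlen ⊢; omega)
    refine ⟨W, fun q => compRel (t ^ (N + 1)) (a ^ q) (powIdeal as C q • ⊤) (L q), hW, ⟨?_, ?_, ?_⟩⟩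
    · intro q hq v hv htv
      have pow_regular : IsRegular B (t ^ q :: ((a :: as).map (· ^ q) ++ C)) :=
        isRegular_map_pow_append hq (t :: a :: as) hreg
      refine hL.exists_compRel hq (Submodule.mem_sup_right hv)
        (Submodule.smul_mono le_rfl le_sup_left ?_)
      exact smul_mem_smul_range_of_factorization
        (isRegular_of_perm pow_regular (List.perm_append_singleton _ _).symm).1 hφψ hv htv
    · intro q hq v hv
      refine hL.mem_of_compRel_zero hq (hM _ ?_ ?_) hv
      · have := isRegular_of_append_left
          (isRegular_of_perm c_regular (List.perm_append_singleton _ _).symm)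
        exact isRegular_of_perm (isRegular_map_pow_append hq as this)
          (List.perm_middle.trans (List.perm_append_singleton _ _).symm)
      · simp only [List.length_append, List.length_map, List.length_cons, List.length_nil]
          at hlen ⊢
        omega
    · exact fun q q' hqq v w => hL.compRel_smul hqq

end ColonControl

end Colon

/-! ### Additive polynomials over an absolutely integrally closed domain -/

section AdditivePolynomials

open Function Polynomial

theorem degree_sum_C_mul_X_pow_pow_lt {A : Type*} [CommRing A] {p : ℕ} (hp : 1 < p) (e : ℕ)
    (γ : ℕ → A) : (∑ j ∈ Finset.range e, C (γ j) * X ^ p ^ j : A[X]).degree < (p ^ e : ℕ) := by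
  refine (degree_sum_le _ _).trans_lt ((Finset.sup_lt_iff (WithBot.bot_lt_coe _)).mpr ?_)
  intro j hj
  refine (degree_C_mul_X_pow_le _ _).trans_lt ?_
  exact_mod_cast Nat.pow_lt_pow_right hp (Finset.mem_range.mp hj)

/-- The homogenised additive polynomial `v ↦ v^q - ∑_{j < e} β_j c^(q - p^j) v^(p^j)`, `q = p^e`,
as an additive endomorphism of a ring of characteristic `p`. -/
def additivePoly {A : Type*} [CommRing A] (p : ℕ) [hp : Fact p.Prime] [CharP A p] (e : ℕ)
    (β : ℕ → A) (c : A) : A →+ A where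
  toFun v := v ^ p ^ e - ∑ j ∈ Finset.range e, β j * c ^ (p ^ e - p ^ j) * v ^ p ^ j
  map_zero' := by simp [zero_pow (pow_ne_zero _ hp.out.ne_zero)]
  map_add' x y := by
    simp only [add_pow_char_pow, mul_add, Finset.sum_add_distrib]
    ring

variable {A : Type*} [CommRing A] {p : ℕ} [hp : Fact p.Prime] [CharP A p]

theorem additivePoly_apply (e : ℕ) (β : ℕ → A) (c v : A) : additivePoly p e β c v =
    v ^ p ^ e - ∑ j ∈ Finset.range e, β j * c ^ (p ^ e - p ^ j) * v ^ p ^ j :=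
  rfl

theorem additivePoly_mul_mul (e : ℕ) (β : ℕ → A) (a c z : A) :
    additivePoly p e β (a * c) (a * z) = a ^ p ^ e * additivePoly p e β c z := by
  rw [additivePoly_apply, additivePoly_apply, mul_sub, Finset.mul_sum, mul_pow]
  congr 1
  refine Finset.sum_congr rfl fun j hj => ?_
  have le : p ^ j ≤ p ^ e := Nat.pow_le_pow_right hp.out.pos (Finset.mem_range.mp hj).le
  rw [← pow_sub_mul_pow a le, mul_pow, mul_pow]
  ring

variable [IsDomain A] [IsIntegrallyClosed A]

theorem additivePoly_surjective [IsAlgClosed (FractionRing A)] (e : ℕ) (β : ℕ → A) (c : A) :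
    Surjective (additivePoly p e β c) := by
  intro s
  have algebraMap_injective : Injective (algebraMap A (FractionRing A)) :=
    IsFractionRing.injective A _
  let lower : A[X] := -(∑ j ∈ Finset.range e, C (β j * c ^ (p ^ e - p ^ j)) * X ^ p ^ j) - C s
  have lower_degree : lower.degree < (p ^ e : ℕ) := by
    refine (degree_sub_le _ _).trans_lt (max_lt ?_ ?_)
    · rw [degree_neg]
      exact degree_sum_C_mul_X_pow_pow_lt hp.out.one_lt e _
    · exact degree_C_le.trans_lt (by exact_mod_cast Nat.pow_pos hp.out.pos)
  have monic : (X ^ p ^ e + lower).Monic := monic_X_pow_add lower_degree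
  have degree_ne_zero : (X ^ p ^ e + lower).degree ≠ 0 := by
    rw [degree_add_eq_left_of_degree_lt (by rwa [degree_X_pow]), degree_X_pow]
    exact_mod_cast pow_ne_zero _ hp.out.ne_zero
  obtain ⟨x, hx⟩ :=
    IsAlgClosed.exists_aeval_eq_zero_of_injective _ algebraMap_injective _ degree_ne_zero
  obtain ⟨z, rfl⟩ := IsIntegrallyClosed.isIntegral_iff.mp (⟨_, monic, hx⟩ : IsIntegral A x)
  refine ⟨z, sub_eq_zero.mp (algebraMap_injective ?_)⟩
  rw [aeval_algebraMap_apply, coe_aeval_eq_eval] at hx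
  rw [map_zero, ← hx, additivePoly_apply]
  congr 1
  simp only [lower, eval_add, eval_sub, eval_neg, eval_pow, eval_X, eval_C, eval_finsetSum,
    eval_mul]
  ring

theorem dvd_of_additivePoly_eq_zero {e : ℕ} {β : ℕ → A} {c w : A}
    (hw : additivePoly p e β c w = 0) : c ∣ w := by
  rw [additivePoly_apply] at hw
  by_cases hc : c = 0
  · rw [Finset.sum_eq_zero, sub_zero] at hw
    · exact (eq_zero_of_pow_eq_zero hw) ▸ dvd_zero c
    · intro j hj
      have lt : p ^ j < p ^ e := Nat.pow_lt_pow_right hp.out.one_lt (Finset.mem_range.mp hj)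
      rw [hc, zero_pow (Nat.sub_ne_zero_of_lt lt), mul_zero, zero_mul]
  · let ι := algebraMap A (FractionRing A)
    have ι_injective : Injective ι := IsFractionRing.injective A _
    have ι_ne_zero : ι c ≠ 0 := (map_ne_zero_iff ι ι_injective).mpr hc
    have integral : IsIntegral A (ι w / ι c) := by
      refine ⟨X ^ p ^ e + -∑ j ∈ Finset.range e, C (β j) * X ^ p ^ j, monic_X_pow_add
        (by rw [degree_neg]; exact degree_sum_C_mul_X_pow_pow_lt hp.out.one_lt e _), ?_⟩
      have scale : ∀ j ∈ Finset.range e, ι (β j) * (ι w / ι c) ^ p ^ j =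
          ι (β j) * ι c ^ (p ^ e - p ^ j) * ι w ^ p ^ j / ι c ^ p ^ e := by
        intro j hj
        have le : p ^ j ≤ p ^ e := Nat.pow_le_pow_right hp.out.pos (Finset.mem_range.mp hj).le
        rw [← pow_sub_mul_pow (ι c) le, div_pow]
        field_simp
      have hw' := congrArg ι hw
      simp only [map_sub, map_sum, map_mul, map_pow, map_zero] at hw'
      simp only [eval₂_add, eval₂_neg, eval₂_pow, eval₂_X, eval₂_finsetSum, eval₂_mul, eval₂_C]
      rw [Finset.sum_congr rfl scale, ← Finset.sum_div, div_pow, ← sub_eq_add_neg, ← sub_div, hw',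
        zero_div]
    obtain ⟨r, hr⟩ := IsIntegrallyClosed.isIntegral_iff.mp integral
    exact ⟨r, ι_injective (by rw [map_mul, hr, mul_div_cancel₀ _ ι_ne_zero])⟩

variable {B : Type*} [CommRing B] [Algebra B A] [IsAlgClosed (FractionRing A)]

theorem exists_additivePoly_eq_of_mem_ofList_map_pow {e : ℕ} {β : ℕ → A} {P : B} {l : List B}
    (hP : ∀ a ∈ l, a ∣ P) {x : A}
    (hx : x ∈ Ideal.ofList (l.map (· ^ p ^ e)) • (⊤ : Submodule B A)) :
    ∃ y ∈ Ideal.ofList l • (⊤ : Submodule B A), additivePoly p e β (algebraMap B A P) y = x := by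
  induction l generalizing x with
  | nil => exact ⟨0, zero_mem _, by simp_all⟩
  | cons a l ih =>
    rw [List.map_cons, Ideal.ofList_cons, mem_span_singleton_sup_smul_iff] at hx
    obtain ⟨s, -, hs⟩ := hx
    obtain ⟨y, hy, hyx⟩ := ih (fun b hb => hP b (List.mem_cons_of_mem a hb)) hs
    obtain ⟨c, rfl⟩ := hP a List.mem_cons_self
    obtain ⟨z, rfl⟩ := additivePoly_surjective e β (algebraMap B A c) s
    refine ⟨y + a • z, ?_, ?_⟩
    · rw [Ideal.ofList_cons, mem_span_singleton_sup_smul_iff]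
      exact ⟨z, trivial, by rwa [add_sub_cancel_right]⟩
    · rw [map_add, hyx, Algebra.smul_def, Algebra.smul_def, map_mul (algebraMap B A),
        additivePoly_mul_mul, map_pow, sub_add_cancel]

theorem mem_ofList_of_additivePoly_mem {e : ℕ} {β : ℕ → A} {l : List B} (hl : l ≠ []) {v : A}
    (hv : additivePoly p e β (algebraMap B A l.prod) v ∈
      Ideal.ofList (l.map (· ^ p ^ e)) • (⊤ : Submodule B A)) :
    v ∈ Ideal.ofList l • (⊤ : Submodule B A) := by
  obtain ⟨y, hy, hyv⟩ :=
    exists_additivePoly_eq_of_mem_ofList_map_pow (fun _ => List.dvd_prod) hv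
  obtain ⟨r, hr⟩ : algebraMap B A l.prod ∣ v - y :=
    dvd_of_additivePoly_eq_zero (by rw [map_sub, hyv, sub_self])
  have prod_mem : l.prod ∈ Ideal.ofList l := by
    obtain ⟨a, ha⟩ := List.exists_mem_of_ne_nil l hl
    exact Ideal.mem_of_dvd _ (List.dvd_prod ha) (Ideal.subset_span ha)
  rw [← sub_add_cancel v y, hr, ← Algebra.smul_def]
  exact add_mem (Submodule.smul_mem_smul prod_mem trivial) hy

end AdditivePolynomials

section RegularOnIntegralExtension

open Function RingTheory.Sequence

theorem exists_eq_sum_smul_of_fg {B M : Type*} [CommRing B] [IsNoetherianRing B]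
    [AddCommGroup M] [Module B M] {W : Submodule B M} (hW : W.FG) {w : ℕ → M}
    (hw : ∀ e, w e ∈ W) : ∃ (e : ℕ) (β : ℕ → B), w e = ∑ j ∈ Finset.range e, β j • w j := by
  have : IsNoetherian B W := isNoetherian_of_fg_of_noetherian W hW
  let v : ℕ → W := fun j => ⟨w j, hw j⟩
  let spans : ℕ →o Submodule B W :=
    ⟨fun e => Submodule.span B (v '' (Finset.range e : Set ℕ)), fun a b hab =>
      Submodule.span_mono (Set.image_mono (Finset.coe_subset.mpr (Finset.range_mono hab)))⟩
  obtain ⟨e, he⟩ := monotone_stabilizes_iff_noetherian.mpr this spans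
  have v_mem : v e ∈ spans e :=
    he (e + 1) e.le_succ ▸ Submodule.subset_span ⟨e, by simp, rfl⟩
  obtain ⟨β, hβ⟩ := Submodule.mem_span_image_finset_iff_exists_fun B |>.mp v_mem
  refine ⟨e, fun j => if h : j ∈ Finset.range e then β ⟨j, h⟩ else 0, ?_⟩
  rw [← Finset.sum_coe_sort, show w e = (v e : M) from rfl, ← hβ]
  simp [v]

theorem exists_finite_forall_mem_smul {B M : Type*} [CommRing B] [AddCommGroup M] [Module B M]
    {I : Ideal B} {x : M} (hx : x ∈ I • (⊤ : Submodule B M)) :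
    ∃ T : Set M, T.Finite ∧ ∀ S : Submodule B M, T ⊆ S → x ∈ I • S := by
  induction hx using Submodule.smul_induction_on' with
  | smul r hr n _ =>
    exact ⟨{n}, Set.finite_singleton n, fun S hS => Submodule.smul_mem_smul hr (hS rfl)⟩
  | add x _ y _ hx hy =>
    obtain ⟨T, hT, hTx⟩ := hx
    obtain ⟨U, hU, hUy⟩ := hy
    exact ⟨T ∪ U, hT.union hU, fun S hS => add_mem
      (hTx S (Set.subset_union_left.trans hS)) (hUy S (Set.subset_union_right.trans hS))⟩

theorem exists_subalgebra_fg_mem_smul {B A : Type*} [CommRing B] [CommRing A] [Algebra B A]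
    [Algebra.IsIntegral B A] {I : Ideal B} (v : A) {x : A} (hx : x ∈ I • (⊤ : Submodule B A)) :
    ∃ S : Subalgebra B A, (Subalgebra.toSubmodule S).FG ∧ v ∈ S ∧
      x ∈ I • Subalgebra.toSubmodule S := by
  obtain ⟨T, hT, hTx⟩ := exists_finite_forall_mem_smul hx
  refine ⟨Algebra.adjoin B (insert v T), fg_adjoin_of_finite (hT.insert v) fun x _ =>
    Algebra.IsIntegral.isIntegral x, Algebra.subset_adjoin (Set.mem_insert v T), hTx _ ?_⟩
  exact (Set.subset_insert v T).trans Algebra.subset_adjoin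

theorem pow_mem_ofList_map_pow_smul {B A : Type*} [CommRing B] [CommRing A] [Algebra B A]
    {p : ℕ} [hp : Fact p.Prime] [CharP A p] (e : ℕ) {S : Subalgebra B A} {l : List B} {x : A}
    (hx : x ∈ Ideal.ofList l • Subalgebra.toSubmodule S) :
    x ^ p ^ e ∈ Ideal.ofList (l.map (· ^ p ^ e)) • Subalgebra.toSubmodule S := by
  induction l generalizing x with
  | nil =>
    simp only [Ideal.ofList_nil, Submodule.bot_smul, Submodule.mem_bot, List.map_nil] at hx ⊢
    rw [hx, zero_pow (pow_ne_zero _ hp.out.ne_zero)]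
  | cons a l ih =>
    rw [Ideal.ofList_cons, mem_span_singleton_sup_smul_iff] at hx
    obtain ⟨y, hy, hxy⟩ := hx
    rw [List.map_cons, Ideal.ofList_cons, mem_span_singleton_sup_smul_iff]
    refine ⟨y ^ p ^ e, S.pow_mem hy _, ?_⟩
    rw [← smul_pow, ← sub_pow_char_pow]
    exact ih hxy

variable {B A : Type*} [CommRing B] [CommRing A] [Algebra B A]

theorem ColonControl.exists_additivePoly_mem {p : ℕ} [hp : Fact p.Prime] [CharP A p]
    [IsNoetherianRing B] {l : List B} {b : B}
    {S : Subalgebra B A} {W : Submodule B A} {L : ℕ → Submodule B (A × A)} (hW : W.FG)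
    (hL : ColonControl l [] b (Subalgebra.toSubmodule S) W L) {v : A} (hv : v ∈ S)
    (hbv : b • v ∈ Ideal.ofList l • Subalgebra.toSubmodule S) :
    ∃ (e : ℕ) (β : ℕ → A), additivePoly p e β (algebraMap B A l.prod) v ∈
      Ideal.ofList (l.map (· ^ p ^ e)) • (⊤ : Submodule B A) := by
  have pow_pos (e : ℕ) : 0 < p ^ e := Nat.pow_pos hp.out.pos
  have exists_rel (e : ℕ) : ∃ w ∈ W, (v ^ p ^ e, w) ∈ L (p ^ e) := by
    refine hL.exists_rel (p ^ e) (pow_pos e) _ (S.pow_mem hv _) ?_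
    rw [← smul_pow, powIdeal, List.append_nil]
    exact pow_mem_ofList_map_pow_smul e hbv
  choose w hwW hwL using exists_rel
  obtain ⟨e, β, hβ⟩ := exists_eq_sum_smul_of_fg hW hwW
  refine ⟨e, fun j => algebraMap B A (β j), ?_⟩
  have sum_rel : ∑ j ∈ Finset.range e,
      β j • ((l.prod ^ (p ^ e - p ^ j) • v ^ p ^ j, w j) : A × A) ∈ L (p ^ e) :=
    sum_mem fun j hj => Submodule.smul_mem _ _ (hL.rel_smul _ _
      (Nat.pow_le_pow_right hp.out.pos (Finset.mem_range.mp hj).le) _ _ (hwL j))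
  have rel_zero : (additivePoly p e (fun j => algebraMap B A (β j)) (algebraMap B A l.prod) v, 0)
      ∈ L (p ^ e) := by
    convert sub_mem (hwL e) sum_rel using 1
    ext
    · simp [Prod.fst_sum, additivePoly_apply, Algebra.smul_def, mul_assoc]
    · simp [Prod.snd_sum, ← hβ]
  simpa [powIdeal] using hL.mem_of_rel_zero (p ^ e) (pow_pos e) _ rel_zero

variable [IsLocalRing B] [IsNoetherianRing B] [IsDomain A] [IsIntegrallyClosed A]
  [IsAlgClosed (FractionRing A)] [Algebra.IsIntegral B A]

theorem isSMulRegular_quotient_ofList_of_powSMulFactorsThroughFree (p : ℕ) [Fact p.Prime]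
    [CharP A p] (hfree : PowSMulFactorsThroughFree B A) {n : ℕ}
    (hA : ∀ l : List B, IsRegular B l → l.length ≤ n → IsWeaklyRegular A l) {l : List B} {b : B}
    (hl : l ≠ []) (hlen : l.length ≤ n) (hreg : IsRegular B (b :: l)) :
    IsSMulRegular (A ⧸ Ideal.ofList l • (⊤ : Submodule B A)) b := by
  rw [isSMulRegular_quotient_iff_mem_of_smul_mem]
  intro v hbv
  obtain ⟨S, hS, hvS, hbvS⟩ := exists_subalgebra_fg_mem_smul v hbv
  obtain ⟨W, L, hW, hL⟩ := exists_colonControl hfree hA l [] b (Subalgebra.toSubmodule S) hS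
    (by rwa [List.append_nil]) hlen
  obtain ⟨e, β, hβ⟩ := hL.exists_additivePoly_mem (p := p) hW hvS hbvS
  exact mem_ofList_of_additivePoly_mem hl hβ

theorem isWeaklyRegular_of_powSMulFactorsThroughFree (p : ℕ) [Fact p.Prime] [CharP A p]
    (hinj : Injective (algebraMap B A)) (hfree : PowSMulFactorsThroughFree B A)
    {l : List B} (hl : IsRegular B l) : IsWeaklyRegular A l := by
  suffices ∀ n, ∀ l : List B, IsRegular B l → l.length ≤ n → IsWeaklyRegular A l from
    this _ l hl le_rfl
  intro n
  induction n with
  | zero =>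
    intro l _ hlen
    rw [List.length_eq_zero_iff.mp (Nat.le_zero.mp hlen)]
    exact .nil B A
  | succ n ih =>
    intro l hl hlen
    rcases List.eq_nil_or_concat l with rfl | ⟨rs, b, rfl⟩
    · exact .nil B A
    rw [List.concat_eq_append] at hl hlen ⊢
    have rs_length : rs.length ≤ n := by simpa using hlen
    rw [isWeaklyRegular_append_iff, isWeaklyRegular_singleton_iff]
    refine ⟨ih rs (isRegular_of_append_left hl) rs_length, ?_⟩
    rcases eq_or_ne rs [] with rfl | rs_ne
    · have b_ne_zero : b ≠ 0 := by
        rintro rfl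
        have := (isWeaklyRegular_singleton_iff B (0 : B)).mp hl.1
        exact one_ne_zero (this (by simp : (0 : B) • (1 : B) = (0 : B) • 0))
      rw [isSMulRegular_quotient_iff_mem_of_smul_mem]
      intro v hv
      rw [Ideal.ofList_nil, Submodule.bot_smul, Submodule.mem_bot] at hv ⊢
      rw [Algebra.smul_def, mul_eq_zero, map_eq_zero_iff _ hinj] at hv
      exact hv.resolve_left b_ne_zero
    · exact isSMulRegular_quotient_ofList_of_powSMulFactorsThroughFree p hfree ih rs_ne rs_length
        (isRegular_of_perm hl (List.perm_append_singleton b rs))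

end RegularOnIntegralExtension

/-! ### Flatness of an absolutely integrally closed integral extension -/

section Factorization

open Function

variable {B M N : Type*} [CommRing B] [AddCommGroup M] [Module B M] [AddCommGroup N] [Module B N]

variable (B M N) in
/-- The submodule of `Hom(N, M)` spanned by the rank one maps `s ↦ φ(s) m`; its elements are the
maps which factor through a finite free module. -/
def finiteRankHom : Submodule B (N →ₗ[B] M) :=
  Submodule.span B (Set.range fun q : (N →ₗ[B] B) × M => q.1.smulRight q.2)

theorem exists_factorization_of_mem_finiteRankHom {h : N →ₗ[B] M} (hh : h ∈ finiteRankHom B M N) :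
    ∃ (r : ℕ) (φ : N →ₗ[B] (Fin r → B)) (ψ : (Fin r → B) →ₗ[B] M), ψ ∘ₗ φ = h := by
  obtain ⟨r, f, q, rfl⟩ := Submodule.mem_span_set'.mp hh
  choose q' hq' using fun i => (q i).2
  refine ⟨r, LinearMap.pi fun i => f i • (q' i).1,
    Fintype.linearCombination B fun i => (q' i).2, ?_⟩
  ext s
  simp [Fintype.linearCombination_apply, mul_smul, ← hq']

theorem exists_smul_mem_finiteRankHom_of_flat_localizedModule [Module.FinitePresentation B N]
    {S : Submonoid B} [Module.Flat B (LocalizedModule S M)]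
    (hinj : Injective (LocalizedModule.mkLinearMap S M)) (h : N →ₗ[B] M) :
    ∃ c ∈ S, c • h ∈ finiteRankHom B M N := by
  let g := LocalizedModule.mkLinearMap S M
  obtain ⟨k, φ, ψ, hφψ⟩ := Module.Flat.exists_factorization_of_finitePresentation (g ∘ₗ h)
  obtain ⟨c, hc⟩ := IsLocalizedModule.exist_integer_multiples_of_finite S g
    fun i : Fin k => ψ (Finsupp.single i 1)
  choose w hw using hc
  refine ⟨c, c.2, ?_⟩
  have smul_eq_sum : (c : B) • h = ∑ i : Fin k, (Finsupp.lapply i ∘ₗ φ).smulRight (w i) := by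
    ext s
    apply hinj
    have factor : g (h s) = ψ (φ s) := LinearMap.congr_fun hφψ s
    have basis_sum : ψ (φ s) = ∑ i, φ s i • ψ (Finsupp.single i 1) := by
      simp_rw [← map_smul, Finsupp.smul_single_one, ← map_sum, Finsupp.univ_sum_single]
    change g ((c : B) • h s) = g ((∑ i, (Finsupp.lapply i ∘ₗ φ).smulRight (w i)) s)
    simp only [map_smul, factor, basis_sum, Finset.smul_sum, LinearMap.sum_apply,
      LinearMap.smulRight_apply, map_sum, LinearMap.comp_apply, Finsupp.lapply_apply, g, hw]
    exact Finset.sum_congr rfl fun i _ => smul_comm _ _ _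
  rw [smul_eq_sum]
  exact sum_mem fun i _ => Submodule.subset_span ⟨(_, w i), rfl⟩

theorem injective_mkLinearMap_primeCompl [IsDomain B] [Module.IsTorsionFree B M] (Q : Ideal B)
    [Q.IsPrime] : Injective (LocalizedModule.mkLinearMap Q.primeCompl M) := by
  refine (injective_iff_map_eq_zero _).mpr fun m hm => ?_
  obtain ⟨c, hc⟩ := (IsLocalizedModule.eq_zero_iff Q.primeCompl _).mp hm
  exact (smul_eq_zero.mp hc).resolve_left fun h => c.2 (h ▸ Q.zero_mem)

theorem powSMulFactorsThroughFree_of_flat_localizedModule [IsLocalRing B] [IsNoetherianRing B]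
    [IsDomain B] [Module.IsTorsionFree B M]
    (hloc : ∀ (Q : Ideal B) [Q.IsPrime], Q ≠ maximalIdeal B →
      Module.Flat B (LocalizedModule Q.primeCompl M)) : PowSMulFactorsThroughFree B M := by
  intro S hS t ht
  have : Module.Finite B S := Module.Finite.iff_fg.mpr hS
  have : Module.FinitePresentation B S := Module.finitePresentation_of_finite B S
  let I : Ideal B :=
    (finiteRankHom B M S).comap (LinearMap.toSpanSingleton B (S →ₗ[B] M) S.subtype)
  have t_mem_radical : t ∈ I.radical := by
    rw [Ideal.radical_eq_sInf, Ideal.mem_sInf]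
    rintro Q ⟨hIQ, hQ⟩
    by_cases hne : Q = maximalIdeal B
    · exact hne ▸ ht
    · have := hloc Q hne
      obtain ⟨c, hcQ, hc⟩ := exists_smul_mem_finiteRankHom_of_flat_localizedModule
        (injective_mkLinearMap_primeCompl (M := M) Q) S.subtype
      exact absurd (hIQ hc) hcQ
  obtain ⟨N, hN⟩ := t_mem_radical
  have pow_mem : t ^ (N + 1) ∈ I := pow_succ t N ▸ Ideal.mul_mem_right t I hN
  obtain ⟨r, φ, ψ, hφψ⟩ := exists_factorization_of_mem_finiteRankHom pow_mem
  exact ⟨N, r, φ, ψ, fun s => LinearMap.congr_fun hφψ s⟩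

end Factorization

section Flatness

open Function

theorem flat_localizedModule_of_flat_comap {A B M N : Type*} [CommRing A] [CommRing B]
    [Algebra A B] (S : Submonoid A) [IsLocalization S B] [AddCommGroup M] [Module A M]
    [AddCommGroup N] [Module A N] [Module B N] [IsScalarTower A B N] (f : M →ₗ[A] N)
    [hf : IsLocalizedModule S f] (Q : Ideal B) [Q.IsPrime]
    [Module.Flat A (LocalizedModule (Q.comap (algebraMap A B)).primeCompl M)] :
    Module.Flat B (LocalizedModule Q.primeCompl N) := by
  let O := LocalizedModule Q.primeCompl N
  let C := Localization.AtPrime Q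
  let S' := (Q.comap (algebraMap A B)).primeCompl
  let g : N →ₗ[B] O := LocalizedModule.mkLinearMap Q.primeCompl N
  have : IsScalarTower A C O := .of_algebraMap_smul fun r x => by
    rw [IsScalarTower.algebraMap_apply A B C, algebraMap_smul, algebraMap_smul]
  have : IsLocalization.AtPrime C (Q.comap (algebraMap A B)) :=
    IsLocalization.isLocalization_isLocalization_atPrime_isLocalization S C Q
  have f_baseChange : IsBaseChange B f := (isLocalizedModule_iff_isBaseChange S B f).mp hf
  have g_baseChange : IsBaseChange C g :=
    (isLocalizedModule_iff_isBaseChange Q.primeCompl C g).mp inferInstance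
  have : IsLocalizedModule S' (g.restrictScalars A ∘ₗ f) :=
    (isLocalizedModule_iff_isBaseChange S' C _).mpr (f_baseChange.comp g_baseChange)
  have : Module.Flat A O := Module.Flat.of_linearEquiv (IsLocalizedModule.linearEquiv S'
    (g.restrictScalars A ∘ₗ f) (LocalizedModule.mkLinearMap S' M))
  exact (Module.flat_iff_of_isLocalization (R := A) B S _).mpr this

theorem comap_algebraMap_lt_of_ne_maximalIdeal {A B : Type*} [CommRing A] [CommRing B]
    [Algebra A B] [IsLocalRing B] (P : Ideal A) [P.IsPrime] [IsLocalization.AtPrime B P]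
    {Q : Ideal B} [Q.IsPrime] (hQ : Q ≠ maximalIdeal B) : Q.comap (algebraMap A B) < P := by
  refine lt_of_le_of_ne ?_ fun h => hQ ?_
  · exact (Ideal.comap_mono (le_maximalIdeal Ideal.IsPrime.ne_top')).trans
      (IsLocalization.AtPrime.under_maximalIdeal B P).le
  · rw [← IsLocalization.map_under P.primeCompl B Q, Ideal.under_def, h]
    exact IsLocalization.AtPrime.map_eq_maximalIdeal P B

theorem isAlgClosed_fractionRing_localization {Ω : Type*} [CommRing Ω] [IsDomain Ω]
    [IsAlgClosed (FractionRing Ω)] {S : Submonoid Ω} (hS : S ≤ nonZeroDivisors Ω)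
    [IsDomain (Localization S)] : IsAlgClosed (FractionRing (Localization S)) := by
  let K := FractionRing Ω
  let toK : Localization S →+* K := IsLocalization.lift (M := S) (g := algebraMap Ω K) fun s =>
    IsLocalization.map_units K (⟨s, hS s.2⟩ : nonZeroDivisors Ω)
  let : Algebra (Localization S) K := toK.toAlgebra
  have : IsScalarTower Ω (Localization S) K := .of_algebraMap_eq fun x => by
    rw [RingHom.algebraMap_toAlgebra, IsLocalization.lift_eq]
  have := IsFractionRing.isFractionRing_of_isDomain_of_isLocalization S (Localization S) K
  exact IsAlgClosed.of_ringEquiv K _ (FractionRing.algEquiv (Localization S) K).symm.toRingEquiv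

variable {A Ω : Type u} [CommRing A] [IsNoetherianRing A] [CommRing Ω] [Algebra A Ω] [IsDomain Ω]
  [IsIntegrallyClosed Ω] [IsAlgClosed (FractionRing Ω)] [Algebra.IsIntegral A Ω]

theorem HasFlatDimLE.flat_of_forall_flat_localizedModule [IsLocalRing A] (p : ℕ) [Fact p.Prime]
    [CharP Ω p] (hinj : Injective (algebraMap A Ω)) {n : ℕ} (hdim : HasFlatDimLE A n Ω)
    (hloc : ∀ (Q : Ideal A) [Q.IsPrime], Q ≠ maximalIdeal A →
      Module.Flat A (LocalizedModule Q.primeCompl Ω)) : Module.Flat A Ω := by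
  have : IsDomain A := hinj.isDomain
  have : Module.IsTorsionFree A Ω := Module.isTorsionFree_iff_algebraMap_injective.mpr hinj
  have := powSMulFactorsThroughFree_of_flat_localizedModule hloc
  exact hdim.flat_of_isWeaklyRegular
    (fun _ => isWeaklyRegular_of_powSMulFactorsThroughFree p hinj this) hloc

theorem HasFlatDimLE.flat_localizedModule_of_forall_lt (p : ℕ) [Fact p.Prime] [CharP Ω p]
    (hinj : Injective (algebraMap A Ω)) {n : ℕ} (hdim : HasFlatDimLE A n Ω) (P : Ideal A)
    [P.IsPrime] (hlt : ∀ (Q : Ideal A) [Q.IsPrime], Q < P →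
      Module.Flat A (LocalizedModule Q.primeCompl Ω)) :
    Module.Flat A (LocalizedModule P.primeCompl Ω) := by
  let B := Localization.AtPrime P
  let S := Algebra.algebraMapSubmonoid Ω P.primeCompl
  let Ω' := Localization S
  have hS : S ≤ nonZeroDivisors Ω := by
    rintro _ ⟨c, hc, rfl⟩
    rw [mem_nonZeroDivisors_iff_ne_zero, map_ne_zero_iff _ hinj]
    exact fun h => hc (h ▸ P.zero_mem)
  have : IsDomain Ω' := IsLocalization.isDomain_localization hS
  have : IsIntegrallyClosed Ω' := isIntegrallyClosed_of_isLocalization Ω' S hS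
  have : IsAlgClosed (FractionRing Ω') := isAlgClosed_fractionRing_localization hS
  have : CharP Ω' p := charP_of_injective_algebraMap (IsLocalization.injective Ω' hS) p
  have : Algebra.IsIntegral B Ω' := ⟨isIntegral_localization (M := P.primeCompl) (S := Ω)⟩
  have hinj' : Injective (algebraMap B Ω') := by
    have : IsLocalization (P.primeCompl.map (algebraMap A Ω)) Ω' :=
      Localization.isLocalization (M := S)
    exact IsLocalization.map_injective_of_injective P.primeCompl B Ω' hinj
  let toΩ' : Ω →ₗ[A] Ω' := (IsScalarTower.toAlgHom A Ω Ω').toLinearMap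
  let e : LocalizedModule P.primeCompl Ω ≃ₗ[A] Ω' :=
    IsLocalizedModule.linearEquiv P.primeCompl (LocalizedModule.mkLinearMap _ Ω) toΩ'
  have hdim' : HasFlatDimLE B n Ω' := (hdim.localizedModule P.primeCompl).of_linearEquiv
    (e.extendScalarsOfIsLocalization P.primeCompl B)
  have : Module.Flat B Ω' := by
    refine hdim'.flat_of_forall_flat_localizedModule p hinj' fun Q _ hQ => ?_
    have := hlt _ (comap_algebraMap_lt_of_ne_maximalIdeal P hQ)
    exact flat_localizedModule_of_flat_comap P.primeCompl toΩ' Q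
  have : Module.Flat A Ω' := (Module.flat_iff_of_isLocalization (R := A) B P.primeCompl _).mp this
  exact Module.Flat.of_linearEquiv e

theorem HasFlatDimLE.flat_of_isIntegral (p : ℕ) [Fact p.Prime] [CharP Ω p]
    (hinj : Injective (algebraMap A Ω)) {n : ℕ} (hdim : HasFlatDimLE A n Ω) :
    Module.Flat A Ω := by
  suffices ∀ P : PrimeSpectrum A, Module.Flat A (LocalizedModule P.asIdeal.primeCompl Ω) from
    Module.flat_of_localized_maximal _ fun P hP => this ⟨P, hP.isPrime⟩
  intro P
  induction h : P.asIdeal.height using WellFoundedLT.induction generalizing P with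
  | _ m ih =>
    exact hdim.flat_localizedModule_of_forall_lt p hinj P.asIdeal fun Q hQ hlt => ih Q.height
      (h ▸ Ideal.height_strict_mono_of_isPrime_of_isPrime hlt) ⟨Q, hQ⟩ rfl

end Flatness

/-! ### Power series over a field -/

section PowerSeries

open MvPowerSeries RingTheory.Sequence

theorem mem_span_X_image_iff {σ R : Type*} [CommRing R] {s : Finset σ} {f : MvPowerSeries σ R} :
    f ∈ Ideal.span (X '' (s : Set σ)) ↔ ∀ m : σ →₀ ℕ, (∀ j ∈ s, m j = 0) → coeff m f = 0 := by
  classical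
  induction s using Finset.induction_on generalizing f with
  | empty => simp [MvPowerSeries.ext_iff]
  | insert a s _ ih =>
    rw [Finset.coe_insert, Set.image_insert_eq, Ideal.mem_span_insert]
    constructor
    · rintro ⟨c, z, hz, rfl⟩ m hm
      rw [map_add, ih.mp hz m fun j hj => hm j (Finset.mem_insert_of_mem hj), add_zero]
      exact X_dvd_iff.mp (Dvd.intro_left c rfl) m (hm a (Finset.mem_insert_self _ _))
    · intro h
      let g : MvPowerSeries σ R := fun m => if m a = 0 then 0 else coeff m f
      have coeff_g (m) : coeff m g = if m a = 0 then 0 else coeff m f := rfl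
      obtain ⟨c, hc⟩ : X a ∣ g := X_dvd_iff.mpr fun m hm => by rw [coeff_g, if_pos hm]
      refine ⟨c, f - g, ih.mpr fun m hm => ?_, by rw [mul_comm, ← hc]; ring⟩
      rw [map_sub, coeff_g]
      split_ifs with hma
      · rw [sub_zero]
        exact h m ((Finset.forall_mem_insert a s _).mpr ⟨hma, hm⟩)
      · rw [sub_self]

theorem span_X_image_eq_ker_killCompl {σ R : Type*} [CommRing R] (s : Finset σ) :
    Ideal.span (X '' (s : Set σ)) =
      RingHom.ker (killCompl (R := R) (Function.Embedding.subtype fun j => j ∉ s)) := by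
  ext f
  rw [mem_span_X_image_iff, RingHom.mem_ker, MvPowerSeries.ext_iff]
  simp only [coeff_killCompl, map_zero]
  constructor
  · refine fun h m => h _ fun j hj => Finsupp.embDomain_of_notMem_range _ _ _ ?_
    rintro ⟨i, rfl⟩
    exact i.2 hj
  · intro h m hm
    have support_subset : (m.support : Set σ) ⊆
        Set.range (Function.Embedding.subtype fun j => j ∉ s) := by
      intro j hj
      exact ⟨⟨j, fun hjs => Finsupp.mem_support_iff.mp hj (hm j hjs)⟩, rfl⟩
    obtain ⟨m', rfl⟩ := (Finsupp.mem_range_embDomain_iff _ _).mpr support_subset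
    exact h m'

theorem isPrime_span_X_image {σ R : Type*} [CommRing R] [IsDomain R] (s : Finset σ) :
    (Ideal.span ((X : σ → MvPowerSeries σ R) '' (s : Set σ))).IsPrime := by
  have : IsDomain (MvPowerSeries {j // j ∉ s} R) := NoZeroDivisors.to_isDomain _
  rw [span_X_image_eq_ker_killCompl]
  exact RingHom.ker_isPrime _

theorem ofList_map_X {σ R : Type*} [CommRing R] [DecidableEq σ] (l : List σ) :
    Ideal.ofList (l.map (X : σ → MvPowerSeries σ R)) = Ideal.span (X '' (l.toFinset : Set σ)) := by
  rw [Ideal.ofList]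
  congr 1
  ext f
  simp

theorem isWeaklyRegular_map_X {σ R : Type*} [CommRing R] [IsDomain R] {l : List σ}
    (hl : l.Nodup) : IsWeaklyRegular (MvPowerSeries σ R) (l.map (X : σ → MvPowerSeries σ R)) := by
  classical
  induction l using List.reverseRecOn with
  | nil => exact .nil _ _
  | append_singleton l a ih =>
    rw [List.nodup_append] at hl
    rw [List.map_append, isWeaklyRegular_append_iff, List.map_singleton,
      isWeaklyRegular_singleton_iff]
    refine ⟨ih hl.1, ?_⟩
    rw [smul_eq_mul, Ideal.mul_top, ofList_map_X]
    have := isPrime_span_X_image (R := R) l.toFinset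
    refine isSMulRegular_quotient_of_notMem fun h => ?_
    have coeff_eq_zero := mem_span_X_image_iff.mp h (Finsupp.single a 1) fun j hj =>
      Finsupp.single_eq_of_ne fun hja =>
        hl.2.2 j (List.mem_toFinset.mp hj) a (List.mem_singleton_self a) hja
    simp at coeff_eq_zero

theorem span_range_X_eq_maximalIdeal {σ k : Type*} [Field k] [Finite σ] :
    Ideal.span (Set.range (X : σ → MvPowerSeries σ k)) = maximalIdeal (MvPowerSeries σ k) := by
  have := Fintype.ofFinite σ
  ext f
  rw [← Set.image_univ, ← Finset.coe_univ, mem_span_X_image_iff, mem_maximalIdeal,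
    mem_nonunits_iff, isUnit_iff_constantCoeff, isUnit_iff_ne_zero, not_not]
  constructor
  · intro h
    simpa using h 0 (by simp)
  · intro h m hm
    obtain rfl : m = 0 := Finsupp.ext fun j => hm j (Finset.mem_univ j)
    simpa using h

theorem hasFlatDimLE_mvPowerSeries {k : Type u} [Field k] (d : ℕ) (M : Type u) [AddCommGroup M]
    [Module (MvPowerSeries (Fin d) k) M] : HasFlatDimLE (MvPowerSeries (Fin d) k) d M := by
  have ofList_eq : Ideal.ofList ((List.finRange d).map X) =
      maximalIdeal (MvPowerSeries (Fin d) k) := by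
    rw [ofList_map_X, ← span_range_X_eq_maximalIdeal]
    simp
  simpa using hasFlatDimLE_length_of_ofList_eq_maximalIdeal
    (isWeaklyRegular_map_X (List.nodup_finRange d)) ofList_eq M

end PowerSeries

/-! ### Coefficient fields in characteristic `p` -/

section CoefficientField

open Polynomial

/-- A subring of `S` containing all `p`-th powers and mapped injectively to `k` by `π`. When `π`
is surjective with kernel killed by Frobenius, the maximal ones are the coefficient fields of
`S`, i.e. the images of the sections of `π`. -/
structure IsPartialCoefficientRing {S k : Type*} [CommRing S] [CommRing k] (p : ℕ) (π : S →+* k)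
    (L : Subring S) : Prop where
  pow_mem : ∀ x, x ^ p ∈ L
  eq_zero_of_map_eq_zero : ∀ x ∈ L, π x = 0 → x = 0

theorem eval₂_eq_zero_of_map_eval₂_eq_zero {F S k : Type*} [Field F] [CommRing S] [CommRing k]
    [Nontrivial k] {j : F →+* S} {π : S →+* k} {p : ℕ} (hp : p.Prime) {s : S} {c : F}
    (hs : s ^ p = j c) (hc : ∀ b, b ^ p ≠ c) {q : F[X]} (hq : π (q.eval₂ j s) = 0) :
    q.eval₂ j s = 0 := by
  have eval₂_X_pow_sub_C : (X ^ p - C c : F[X]).eval₂ j s = 0 := by simp [hs]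
  by_cases hdvd : X ^ p - C c ∣ q
  · obtain ⟨r, rfl⟩ := hdvd
    rw [eval₂_mul, eval₂_X_pow_sub_C, zero_mul]
  · obtain ⟨a, b, hab⟩ :=
      (X_pow_sub_C_irreducible_of_prime hp hc).coprime_iff_not_dvd.mpr hdvd
    have zero_eq_one := congrArg (fun r => π (r.eval₂ j s)) hab
    simp [eval₂_mul, eval₂_X_pow_sub_C, hq] at zero_eq_one

theorem isUnit_of_map_ne_zero {S k : Type*} [CommRing S] [Field k] {π : S →+* k}
    (hπ : Function.Surjective π) (hker : ∀ x, π x = 0 → IsNilpotent x) {z : S} (hz : π z ≠ 0) :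
    IsUnit z := by
  obtain ⟨w, hw⟩ := hπ (π z)⁻¹
  have isNilpotent : IsNilpotent (z * w - 1) := hker _ (by simp [hw, hz])
  have isUnit_mul : IsUnit (z * w) := by simpa using isNilpotent.isUnit_one_add
  exact isUnit_of_mul_isUnit_left isUnit_mul

section

variable {S k : Type*} [CommRing S] [Field k] {p : ℕ} [Fact p.Prime] {π : S →+* k}

theorem isPartialCoefficientRing_range_frobenius [CharP S p]
    (hker : ∀ x, π x = 0 → x ^ p = 0) :
    IsPartialCoefficientRing p π (frobenius S p).range where
  pow_mem x := ⟨x, rfl⟩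
  eq_zero_of_map_eq_zero := by
    rintro _ ⟨z, rfl⟩ hz
    rw [frobenius_def, map_pow] at hz
    exact hker z (eq_zero_of_pow_eq_zero hz)

theorem exists_maximal_isPartialCoefficientRing [CharP S p]
    (hker : ∀ x, π x = 0 → x ^ p = 0) :
    ∃ L : Subring S, Maximal (IsPartialCoefficientRing p π) L := by
  have exists_upperBound (c) (hc : c ⊆ {L : Subring S | IsPartialCoefficientRing p π L})
      (hchain : IsChain (· ≤ ·) c) (L) (hL : L ∈ c) :
      ∃ M ∈ {L | IsPartialCoefficientRing p π L}, ∀ L ∈ c, L ≤ M := by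
    have mem_sSup {x : S} : x ∈ sSup c ↔ ∃ L ∈ c, x ∈ L :=
      Subring.mem_sSup_of_directedOn ⟨L, hL⟩ hchain.directedOn
    refine ⟨sSup c, ⟨fun x => ?_, fun x hx => ?_⟩, fun _ => le_sSup⟩
    · exact mem_sSup.mpr ⟨L, hL, (hc hL).pow_mem x⟩
    · obtain ⟨L', hL', hxL'⟩ := mem_sSup.mp hx
      exact (hc hL').eq_zero_of_map_eq_zero x hxL'
  obtain ⟨L, -, hL⟩ := zorn_le_nonempty₀ _ exists_upperBound _
    (isPartialCoefficientRing_range_frobenius hker)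
  exact ⟨L, hL⟩

theorem IsPartialCoefficientRing.isField {L : Subring S} (hL : IsPartialCoefficientRing p π L)
    (hπ : Function.Surjective π) (hker : ∀ x, π x = 0 → x ^ p = 0) : IsField L where
  exists_pair_ne := ⟨0, 1, fun h => by simpa using congrArg (fun t : L => π t) h⟩
  mul_comm := mul_comm
  mul_inv_cancel {a} ha := by
    have map_ne_zero : π a ≠ 0 := fun h => ha (Subtype.ext (hL.eq_zero_of_map_eq_zero a a.2 h))
    obtain ⟨u, hu⟩ := (isUnit_of_map_ne_zero hπ (fun x hx => ⟨p, hker x hx⟩)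
      map_ne_zero).exists_right_inv
    refine ⟨⟨a ^ (p - 1) * u ^ p, L.mul_mem (L.pow_mem a.2 _) (hL.pow_mem u)⟩, Subtype.ext ?_⟩
    change (a : S) * (a ^ (p - 1) * u ^ p) = 1
    rw [← mul_assoc, mul_pow_sub_one (Fact.out : p.Prime).ne_zero, ← mul_pow, hu, one_pow]

theorem exists_mem_of_maximal_isPartialCoefficientRing [CharP k p] {L : Subring S}
    (hL : Maximal (IsPartialCoefficientRing p π) L) (hπ : Function.Surjective π)
    (hker : ∀ x, π x = 0 → x ^ p = 0) (a : k) : ∃ x ∈ L, π x = a := by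
  obtain ⟨s, rfl⟩ := hπ a
  by_contra! hs
  let : Field L := (hL.prop.isField hπ hker).toField
  let c : L := ⟨s ^ p, hL.prop.pow_mem s⟩
  have pow_ne (b : L) : b ^ p ≠ c := by
    intro hb
    have pow_eq : (b : S) ^ p = s ^ p := congrArg Subtype.val hb
    refine hs b b.2 (frobenius_inj k p ?_)
    rw [frobenius_def, frobenius_def, ← map_pow, ← map_pow, pow_eq]
  let L' : Subring S := (eval₂RingHom L.subtype s).range
  have hL' : IsPartialCoefficientRing p π L' := by
    refine ⟨fun x => ⟨C ⟨x ^ p, hL.prop.pow_mem x⟩, by simp⟩, ?_⟩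
    rintro _ ⟨q, rfl⟩ hq
    exact eval₂_eq_zero_of_map_eval₂_eq_zero (c := c) Fact.out rfl pow_ne hq
  have le_L' : L ≤ L' := fun x hx => ⟨C ⟨x, hx⟩, by simp⟩
  exact hs s (hL.le_of_ge hL' le_L' ⟨X, by simp⟩) rfl

theorem exists_comp_eq_id_of_pow_eq_zero_of_map_eq_zero [CharP S p]
    (hπ : Function.Surjective π) (hker : ∀ x, π x = 0 → x ^ p = 0) :
    ∃ s : k →+* S, π.comp s = RingHom.id k := by
  have : CharP k p := (CharP.charP_iff_prime_eq_zero Fact.out).mpr <| by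
    rw [← map_natCast π, CharP.cast_eq_zero, map_zero]
  obtain ⟨L, hL⟩ := exists_maximal_isPartialCoefficientRing hker
  have bijective : Function.Bijective (π.comp L.subtype) := by
    refine ⟨(injective_iff_map_eq_zero _).mpr fun x hx => ?_, fun a => ?_⟩
    · exact Subtype.ext (hL.prop.eq_zero_of_map_eq_zero x x.2 hx)
    · obtain ⟨x, hx, rfl⟩ := exists_mem_of_maximal_isPartialCoefficientRing hL hπ hker a
      exact ⟨⟨x, hx⟩, rfl⟩
  let e := RingEquiv.ofBijective _ bijective
  exact ⟨L.subtype.comp e.symm, RingHom.ext e.apply_symm_apply⟩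

end

-- A lift of `g : k → B / I` to `B` is a section of the projection `B ×_{B / I} k → k`.
theorem formallySmooth_zmod (p : ℕ) [Fact p.Prime] (k : Type*) [Field k] [Algebra (ZMod p) k] :
    Algebra.FormallySmooth (ZMod p) k := by
  refine .of_comp_surjective fun B _ _ I hI g => ?_
  let S : Subalgebra (ZMod p) (B × k) := AlgHom.equalizer
    ((Ideal.Quotient.mkₐ (ZMod p) I).comp (AlgHom.fst _ B k)) (g.comp (AlgHom.snd _ B k))
  let π : S →ₐ[ZMod p] k := (AlgHom.snd _ B k).comp S.val
  have : Nontrivial S := π.toRingHom.domain_nontrivial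
  have : CharP S p := charP_of_injective_algebraMap (algebraMap (ZMod p) S).injective p
  have surjective : Function.Surjective π := by
    intro a
    obtain ⟨b, hb⟩ := Ideal.Quotient.mk_surjective (g a)
    exact ⟨⟨(b, a), hb⟩, rfl⟩
  have pow_eq_zero (x : S) (hx : π x = 0) : x ^ p = 0 := by
    have fst_mem : x.1.1 ∈ I := by
      rw [← Ideal.Quotient.eq_zero_iff_mem]
      exact x.2.trans ((congrArg g hx).trans (map_zero g))
    have sq_eq_zero : x.1.1 ^ 2 = 0 := by
      simpa only [hI, Ideal.mem_bot] using Ideal.pow_mem_pow fst_mem 2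
    have hp : 2 ≤ p := (Fact.out : p.Prime).two_le
    refine Subtype.ext (Prod.ext (pow_eq_zero_of_le hp sq_eq_zero) (pow_eq_zero_of_le hp ?_))
    rw [show x.1.2 = 0 from hx, zero_pow two_ne_zero]
  obtain ⟨s, hs⟩ :=
    exists_comp_eq_id_of_pow_eq_zero_of_map_eq_zero (π := π.toRingHom) surjective pow_eq_zero
  let s' : k →ₐ[ZMod p] S := { s with
    commutes' := RingHom.congr_fun (Subsingleton.elim (s.comp (algebraMap _ _)) (algebraMap _ _)) }
  refine ⟨(AlgHom.fst _ B k).comp (S.val.comp s'), AlgHom.ext fun a => ?_⟩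
  exact (s' a).2.trans (congrArg g (RingHom.congr_fun hs a))

theorem exists_residue_comp_eq_id {R : Type*} [CommRing R] [IsLocalRing R]
    [IsAdicComplete (maximalIdeal R) R] (p : ℕ) [Fact p.Prime] [CharP R p] :
    ∃ ι : ResidueField R →+* R, (residue R).comp ι = RingHom.id _ := by
  let : Algebra (ZMod p) R := ZMod.algebra R p
  have := formallySmooth_zmod p (ResidueField R)
  obtain ⟨ι, hι⟩ := Algebra.FormallySmooth.exists_mkₐ_comp_eq_of_isAdicComplete
    (I := maximalIdeal R) (AlgHom.id (ZMod p) (ResidueField R))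
  exact ⟨ι, RingHom.ext fun a => DFunLike.congr_fun hι a⟩

end CoefficientField

/-! ### Cohen's structure theorem -/

section CohenStructure

open MvPowerSeries Topology

theorem exists_mvPowerSeries_ringHom {σ k R : Type*} [Finite σ] [CommRing k] [CommRing R]
    (I : Ideal R) [IsAdicComplete I R] (ι : k →+* R) {x : σ → R} (hx : ∀ i, x i ∈ I) :
    ∃ φ : MvPowerSeries σ k →+* R, φ.comp C = ι ∧ ∀ i, φ (X i) = x i := by
  let : UniformSpace k := ⊥
  let : WithIdeal R := ⟨I⟩
  obtain ⟨_, _⟩ := (IsAdic.isAdicComplete_iff (I := I) rfl).mp inferInstance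
  have hasEval : HasEval x :=
    ⟨fun i => WithIdeal.isTopologicallyNilpotent_of_mem (hx i), by simp [Filter.cofinite_eq_bot]⟩
  refine ⟨eval₂Hom (continuous_of_discreteTopology (f := ι)) hasEval, ?_, fun i => ?_⟩
  · ext c
    rw [RingHom.comp_apply, coe_eval₂Hom, eval₂_C]
  · rw [coe_eval₂Hom, eval₂_X]

theorem isPrecomplete_pi {A ι : Type*} [CommRing A] [Finite ι] (I : Ideal A) {M : ι → Type*}
    [∀ i, AddCommGroup (M i)] [∀ i, Module A (M i)] [∀ i, IsPrecomplete I (M i)] :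
    IsPrecomplete I (∀ i, M i) := by
  classical
  have := Fintype.ofFinite ι
  refine AdicCompletion.of_surjective_iff.mp fun x => ?_
  choose v hv using fun i => AdicCompletion.of_surjective I (M i) (AdicCompletion.pi I M x i)
  refine ⟨v, (AdicCompletion.piEquivOfFintype I M).injective (funext fun i => ?_)⟩
  simp only [AdicCompletion.piEquivOfFintype_apply, ← hv]
  rfl

theorem module_finite_of_finite_quotient_smul_top {A M : Type*} [CommRing A] [AddCommGroup M]
    [Module A M] (I : Ideal A) [IsPrecomplete I A] [IsHausdorff I M]
    [Module.Finite A (M ⧸ (I • ⊤ : Submodule A M))] : Module.Finite A M := by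
  obtain ⟨n, g, hg⟩ := Module.Finite.exists_fin' A (M ⧸ (I • ⊤ : Submodule A M))
  obtain ⟨f, rfl⟩ := Module.projective_lifting_property (I • ⊤ : Submodule A M).mkQ g
    (Submodule.mkQ_surjective _)
  have := isPrecomplete_pi I (M := fun _ : Fin n => A)
  exact .of_surjective f (surjective_of_mkQ_comp_surjective hg)

theorem isHausdorff_of_le {A M : Type*} [CommRing A] [AddCommGroup M] [Module A M]
    {I J : Ideal A} (hIJ : I ≤ J) [IsHausdorff J M] : IsHausdorff I M where
  haus' z hz := IsHausdorff.haus (I := J) inferInstance z fun n =>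
    (hz n).mono (Submodule.smul_mono_left (Ideal.pow_right_mono hIJ n))

theorem module_finite_quotient_of_surjective_residueField {A R : Type*} [CommRing A] [CommRing R]
    [IsNoetherianRing R] [IsLocalRing R] [Algebra A R]
    (hA : Function.Surjective (algebraMap A (ResidueField R))) {J : Ideal R}
    (hJ : J.radical = maximalIdeal R) : Module.Finite A (R ⧸ J) := by
  have J_le : J ≤ maximalIdeal R := hJ ▸ Ideal.le_radical
  have : Module.Finite A (R ⧸ maximalIdeal R) :=
    .of_surjective (Algebra.linearMap A (R ⧸ maximalIdeal R)) hA
  refine Module.finite_of_surjective_of_ker_le_nilradical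
    (Ideal.Quotient.factorₐ A J_le) (Ideal.Quotient.factor_surjective J_le) ?_
    (IsNoetherian.noetherian _)
  intro z hz
  obtain ⟨r, rfl⟩ := Ideal.Quotient.mk_surjective z
  have r_mem : r ∈ J.radical := hJ ▸ Ideal.Quotient.eq_zero_iff_mem.mp hz
  obtain ⟨n, hn⟩ := r_mem
  exact ⟨n, (map_pow _ r n).symm.trans (Ideal.Quotient.eq_zero_iff_mem.mpr hn)⟩

theorem ringKrullDim_le_of_isIntegral {A R : Type*} [CommRing A] [CommRing R] [Algebra A R]
    [Algebra.IsIntegral A R] : ringKrullDim R ≤ ringKrullDim A :=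
  Order.krullDim_le_of_strictMono (PrimeSpectrum.comap (algebraMap A R)) fun _ _ hPQ =>
    Ideal.IsIntegral.comap_lt_comap hPQ

theorem ringKrullDim_mvPowerSeries_le {σ k : Type*} [Fintype σ] [Field k] :
    ringKrullDim (MvPowerSeries σ k) ≤ Fintype.card σ := by
  refine (ringKrullDim_le_spanFinrank_maximalIdeal _).trans ?_
  rw [← span_range_X_eq_maximalIdeal, Nat.cast_le, ← Nat.card_eq_fintype_card]
  exact (Submodule.spanFinrank_span_le_ncard_of_finite (Set.finite_range _)).trans
    (Finite.card_range_le _)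

theorem injective_algebraMap_of_ringKrullDim_le {A R : Type*} [CommRing A] [IsDomain A] [CommRing R]
    [Algebra A R] [Algebra.IsIntegral A R] {d : ℕ} (hA : ringKrullDim A ≤ d)
    (hR : d ≤ ringKrullDim R) : Function.Injective (algebraMap A R) := by
  refine (injective_iff_map_eq_zero _).mpr fun a ha => ?_
  by_contra ha0
  let : Algebra (A ⧸ Ideal.span {a}) R := (Ideal.Quotient.lift (Ideal.span {a}) (algebraMap A R)
    ((Ideal.span_singleton_le_iff_mem (RingHom.ker _)).mpr ha)).toAlgebra
  have : IsScalarTower A (A ⧸ Ideal.span {a}) R := .of_algebraMap_eq fun _ => rfl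
  have : Algebra.IsIntegral (A ⧸ Ideal.span {a}) R := .tower_top A
  have succ_le : (d + 1 : WithBot ℕ∞) ≤ d := calc
    (d + 1 : WithBot ℕ∞) ≤ ringKrullDim R + 1 := by gcongr
    _ ≤ ringKrullDim (A ⧸ Ideal.span {a}) + 1 := by gcongr; exact ringKrullDim_le_of_isIntegral
    _ ≤ ringKrullDim A :=
      ringKrullDim_quotient_succ_le_of_nonZeroDivisor (mem_nonZeroDivisors_of_ne_zero ha0)
    _ ≤ d := hA
  exact Nat.not_succ_le_self d (by exact_mod_cast succ_le)

theorem module_finite_of_radical_map_eq_maximalIdeal {A R : Type*} [CommRing A] [CommRing R]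
    [IsNoetherianRing R] [IsLocalRing R] [IsAdicComplete (maximalIdeal R) R] [Algebra A R]
    (hA : Function.Surjective (algebraMap A (ResidueField R))) {I : Ideal A} [IsPrecomplete I A]
    (hI : (I.map (algebraMap A R)).radical = maximalIdeal R) : Module.Finite A R := by
  have map_le : I.map (algebraMap A R) ≤ maximalIdeal R := hI ▸ Ideal.le_radical
  have : IsHausdorff I R := (IsHausdorff.map_algebraMap_iff (S := R)).mp (isHausdorff_of_le map_le)
  have : Module.Finite A (R ⧸ I.map (algebraMap A R)) :=
    module_finite_quotient_of_surjective_residueField hA hI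
  have : Module.Finite A (R ⧸ (I • ⊤ : Submodule A R)) := by
    rw [Ideal.smul_top_eq_map]
    exact .equiv (Submodule.Quotient.restrictScalarsEquiv A (I.map (algebraMap A R))).symm
  exact module_finite_of_finite_quotient_smul_top I

theorem finite_of_map_X_of_comp_C {σ R : Type*} [Finite σ] [CommRing R] [IsNoetherianRing R]
    [IsLocalRing R] [IsAdicComplete (maximalIdeal R) R] {φ : MvPowerSeries σ (ResidueField R) →+* R}
    (hφ : (residue R).comp (φ.comp C) = RingHom.id _)
    (hrad : (Ideal.span (Set.range fun i => φ (X i))).radical = maximalIdeal R) : φ.Finite := by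
  let := φ.toAlgebra
  refine module_finite_of_radical_map_eq_maximalIdeal (I := Ideal.span (Set.range X))
    (fun a => ⟨C a, RingHom.congr_fun hφ a⟩) ?_
  rw [Ideal.map_span, ← Set.range_comp]
  exact hrad

theorem exists_finite_injective_mvPowerSeries_ringHom {R : Type*} [CommRing R] [IsNoetherianRing R]
    [IsLocalRing R] [IsAdicComplete (maximalIdeal R) R] (p : ℕ) [Fact p.Prime] [CharP R p]
    {σ : Type*} [Fintype σ] {x : σ → R} (hdim : ringKrullDim R = Fintype.card σ)
    (hrad : (Ideal.span (Set.range x)).radical = maximalIdeal R) :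
    ∃ φ : MvPowerSeries σ (ResidueField R) →+* R,
      φ.Finite ∧ Function.Injective φ ∧ ∀ i, φ (X i) = x i := by
  obtain ⟨ι, hι⟩ := exists_residue_comp_eq_id (R := R) p
  have mem_maximalIdeal (i) : x i ∈ maximalIdeal R :=
    hrad ▸ Ideal.le_radical (Ideal.subset_span ⟨i, rfl⟩)
  obtain ⟨φ, hφC, hφX⟩ := exists_mvPowerSeries_ringHom (maximalIdeal R) ι mem_maximalIdeal
  have finite : φ.Finite := by
    refine finite_of_map_X_of_comp_C (by rw [hφC, hι]) ?_
    simpa only [hφX] using hrad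
  let := φ.toAlgebra
  have : Algebra.IsIntegral (MvPowerSeries σ (ResidueField R)) R := ⟨finite.to_isIntegral⟩
  have : IsDomain (MvPowerSeries σ (ResidueField R)) := NoZeroDivisors.to_isDomain _
  exact ⟨φ, finite, injective_algebraMap_of_ringKrullDim_le
    ringKrullDim_mvPowerSeries_le hdim.ge, hφX⟩

end CohenStructure

/-! ### Colon ideals in flat algebras over the absolute integral closure -/

section FlatColon

open Polynomial

theorem mem_map_of_mul_mem_map_of_flat {A T : Type*} [CommRing A] [CommRing T] {ψ : A →+* T}
    (hψ : ψ.Flat) {I : Ideal A} [I.IsPrime] {b : A} (hb : b ∉ I) {t : T}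
    (h : ψ b * t ∈ I.map ψ) : t ∈ I.map ψ := by
  let := ψ.toAlgebra
  have : Module.Flat A T := hψ
  have mem_iff (z : T) : z ∈ I.map ψ ↔ z ∈ (I • ⊤ : Submodule A T) := by
    rw [Ideal.smul_top_eq_map]
    rfl
  rw [mem_iff] at h ⊢
  exact mem_of_isSMulRegular_quotient_of_smul_mem
    (isSMulRegular_quotient_smul_top_of_flat (isSMulRegular_quotient_of_notMem hb)) h

theorem exists_pow_mul_pow_eq_of_eval_eq_zero {B : Type*} [CommRing B] {F : B[X]} {y : B}
    (hy : F.eval y = 0) {j : ℕ} (hj : ∀ i < j, F.coeff i = 0) :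
    ∃ w, ∀ N, F.coeff j ^ N * y ^ j = y ^ j * y ^ N * w ^ N := by
  obtain ⟨g, rfl⟩ := X_pow_dvd_iff.mpr hj
  have coeff_zero : (X ^ j * g).coeff j = g.coeff 0 := by simpa using coeff_X_pow_mul g j 0
  rw [← divX_mul_X_add g] at hy
  simp only [eval_mul, eval_add, eval_pow, eval_X, eval_C] at hy
  refine ⟨-g.divX.eval y, fun N => ?_⟩
  rw [coeff_zero]
  induction N with
  | zero => ring
  | succ N ih => linear_combination -(g.divX.eval y * y) * ih + g.coeff 0 ^ N * hy

-- Modulo `I`, the polynomial of integral dependence of `y` is `X ^ j` times a polynomial whose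
-- constant term `c` is a nonzerodivisor on `T / IT`; so `c y ^ j` is a multiple of `y ^ (j + 1)`.
theorem exists_forall_pow_mul_mem_map_of_flat {A T : Type*} [CommRing A] [CommRing T]
    {ψ : A →+* T} (hψ : ψ.Flat) (I : Ideal A) [hI : I.IsPrime] {y : T}
    (hy : ψ.IsIntegralElem y) :
    ∃ j : ℕ, ∀ N u, y ^ N * u ∈ I.map ψ → y ^ j * u ∈ I.map ψ := by
  classical
  obtain ⟨f, hf, hfy⟩ := hy
  have exists_coeff_notMem : ∃ j, f.coeff j ∉ I :=
    ⟨f.natDegree, hf.coeff_natDegree ▸ hI.one_notMem⟩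
  let j := Nat.find exists_coeff_notMem
  let π := Ideal.Quotient.mk (I.map ψ)
  have eval_eq_zero : (f.map (π.comp ψ)).eval (π y) = 0 := by
    rw [eval_map, ← hom_eval₂, hfy, map_zero]
  have coeff_eq_zero (i) (hi : i < j) : (f.map (π.comp ψ)).coeff i = 0 := by
    rw [coeff_map]
    exact Ideal.Quotient.eq_zero_iff_mem.mpr
      (Ideal.mem_map_of_mem ψ (not_not.mp (Nat.find_min exists_coeff_notMem hi)))
  obtain ⟨w, hw⟩ := exists_pow_mul_pow_eq_of_eval_eq_zero eval_eq_zero coeff_eq_zero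
  refine ⟨j, fun N u hu => ?_⟩
  have coeff_pow_notMem : f.coeff j ^ N ∉ I := fun h =>
    Nat.find_spec exists_coeff_notMem (hI.mem_of_pow_mem _ h)
  refine mem_map_of_mul_mem_map_of_flat hψ coeff_pow_notMem (Ideal.Quotient.eq_zero_iff_mem.mp ?_)
  have hu' : π y ^ N * π u = 0 := by
    rw [← map_pow, ← map_mul]
    exact Ideal.Quotient.eq_zero_iff_mem.mpr hu
  have hwN := hw N
  rw [coeff_map, RingHom.comp_apply] at hwN
  simp only [map_mul, map_pow]
  change π (ψ (f.coeff j)) ^ N * (π y ^ j * π u) = 0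
  linear_combination π u * hwN + π y ^ j * w ^ N * hu'

theorem iSup_colon_span_pow_eq {T : Type*} [CommRing T] {J : Ideal T} {y : T} {j : ℕ}
    (hj : ∀ N u, y ^ N * u ∈ J → y ^ j * u ∈ J) :
    ⨆ N, J.colon (Ideal.span {y ^ N}) = J.colon (Ideal.span {y ^ j}) := by
  refine le_antisymm (iSup_le fun N u hu => ?_)
    (le_iSup (fun N => J.colon (Ideal.span {y ^ N} : Set T)) j)
  rw [Ideal.mem_colon_span_singleton, mul_comm] at hu ⊢
  exact hj N u hu

end FlatColon

section RPlus

variable (R : Type) [CommRing R] [IsDomain R]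

theorem injective_algebraMap_rPlus : Function.Injective (algebraMap R (RPlus R)) := by
  have : FaithfulSMul R (AlgebraicClosure (FractionRing R)) := .trans R (FractionRing R) _
  exact .of_comp (f := algebraMap (RPlus R) (AlgebraicClosure (FractionRing R)))
    (FaithfulSMul.algebraMap_injective R (AlgebraicClosure (FractionRing R)))

theorem isFractionRing_rPlus : IsFractionRing (RPlus R) (AlgebraicClosure (FractionRing R)) := by
  have : Algebra.IsAlgebraic R (AlgebraicClosure (FractionRing R)) :=
    (IsFractionRing.comap_isAlgebraic_iff (K := FractionRing R)).mpr inferInstance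
  have : FaithfulSMul R (AlgebraicClosure (FractionRing R)) := .trans R (FractionRing R) _
  exact integralClosure.isFractionRing_of_algebraic fun _ hx =>
    (FaithfulSMul.algebraMap_eq_zero_iff R _).mp hx

theorem isIntegrallyClosed_rPlus : IsIntegrallyClosed (RPlus R) :=
  have := isFractionRing_rPlus R
  (isIntegrallyClosed_iff_isIntegrallyClosedIn (AlgebraicClosure (FractionRing R))).mpr
    inferInstance

theorem isAlgClosed_fractionRing_rPlus : IsAlgClosed (FractionRing (RPlus R)) :=
  have := isFractionRing_rPlus R
  .of_ringEquiv (AlgebraicClosure (FractionRing R)) _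
    (FractionRing.algEquiv (RPlus R) (AlgebraicClosure (FractionRing R))).symm

variable {R}

theorem isIntegral_algebraMap_rPlus_comp {A : Type*} [CommRing A] {φ : A →+* R}
    (hφ : φ.IsIntegral) : ((algebraMap R (RPlus R)).comp φ).IsIntegral :=
  hφ.trans _ _ (algebraMap_isIntegral_iff.mpr inferInstance)

theorem flat_algebraMap_rPlus_comp (p : ℕ) [Fact p.Prime] [CharP R p] {k : Type} [Field k] {d : ℕ}
    {φ : MvPowerSeries (Fin d) k →+* R} (hφ : φ.IsIntegral) (hinj : Function.Injective φ) :
    ((algebraMap R (RPlus R)).comp φ).Flat := by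
  have := isIntegrallyClosed_rPlus R
  have := isAlgClosed_fractionRing_rPlus R
  have : CharP (RPlus R) p := charP_of_injective_algebraMap (injective_algebraMap_rPlus R) p
  let : Algebra (MvPowerSeries (Fin d) k) (RPlus R) :=
    ((algebraMap R (RPlus R)).comp φ).toAlgebra
  have : Algebra.IsIntegral (MvPowerSeries (Fin d) k) (RPlus R) :=
    ⟨isIntegral_algebraMap_rPlus_comp hφ⟩
  exact (hasFlatDimLE_mvPowerSeries d (RPlus R)).flat_of_isIntegral p
    ((injective_algebraMap_rPlus R).comp hinj)

theorem flat_plusToT (Λ : Type) [IsLocalRing (RPlus R)]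
    [(Ideal.map (MvPolynomial.C (σ := Λ)) (maximalIdeal (RPlus R))).IsPrime] :
    RingHom.Flat (R := RPlus R) (S := TRing R Λ) (plusToT R Λ) := by
  have flat_C : (MvPolynomial.C : RPlus R →+* MvPolynomial Λ (RPlus R)).Flat :=
    RingHom.flat_algebraMap_iff.mpr inferInstance
  exact flat_C.comp (RingHom.flat_algebraMap_iff.mpr (IsLocalization.flat _
    (Ideal.map (MvPolynomial.C (σ := Λ)) (maximalIdeal (RPlus R))).primeCompl))

end RPlus

theorem stmt16_general {R : Type} [CommRing R] [IsDomain R] [IsNoetherianRing R] [IsLocalRing R]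
    [IsAdicComplete (maximalIdeal R) R] (p : ℕ) [Fact p.Prime] [CharP R p]
    {T : Type*} [CommRing T] {ψ : RPlus R →+* T} (hψ : ψ.Flat)
    {d : ℕ} {x : Fin d → R} (hx : IsSOP R x) (s : Set (Fin d)) (y : RPlus R) :
    ∃ N₀ : ℕ, 0 < N₀ ∧
      ⨆ N : ℕ, (Ideal.span (ψ.comp (algebraMap R (RPlus R)) '' (x '' s))).colon
          (Ideal.span {ψ y ^ N}) =
        (Ideal.span (ψ.comp (algebraMap R (RPlus R)) '' (x '' s))).colon
          (Ideal.span {ψ y ^ N₀}) := by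
  classical
  obtain ⟨φ, hfin, hinj, hφX⟩ :=
    exists_finite_injective_mvPowerSeries_ringHom p (by simpa using hx.1) hx.2
  let toPlus : MvPowerSeries (Fin d) (ResidueField R) →+* RPlus R := (algebraMap R (RPlus R)).comp φ
  have flat_comp : (ψ.comp toPlus).Flat :=
    (flat_algebraMap_rPlus_comp p hfin.to_isIntegral hinj).comp hψ
  have isIntegralElem : (ψ.comp toPlus).IsIntegralElem (ψ y) := by
    obtain ⟨f, hf, hfy⟩ := isIntegral_algebraMap_rPlus_comp hfin.to_isIntegral y
    exact ⟨f, hf, by rw [← Polynomial.hom_eval₂, hfy, map_zero]⟩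
  let I : Ideal (MvPowerSeries (Fin d) (ResidueField R)) :=
    Ideal.span (MvPowerSeries.X '' (s.toFinset : Set (Fin d)))
  have : I.IsPrime := isPrime_span_X_image s.toFinset
  have map_I : I.map (ψ.comp toPlus) =
      Ideal.span (ψ.comp (algebraMap R (RPlus R)) '' (x '' s)) := by
    simp [I, toPlus, Ideal.map_span, Set.image_image, hφX]
  obtain ⟨j, hj⟩ := exists_forall_pow_mul_mem_map_of_flat flat_comp I isIntegralElem
  rw [map_I] at hj
  refine ⟨j + 1, j.succ_pos, iSup_colon_span_pow_eq fun N u hu => ?_⟩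
  rw [pow_succ', mul_assoc]
  exact Ideal.mul_mem_left _ _ (hj N u hu)

/-- With `T = R⁺(t_λ : λ ∈ Λ)` for an uncountable set `Λ` of indeterminates,
the colon ideal `(x₁, …, xₙ)T : y^∞` stabilizes at a finite power for every `1 ≤ n ≤ d`. -/
theorem stmt16 (R : Type) [CommRing R] [IsDomain R] [IsNoetherianRing R] [IsLocalRing R]
    [IsAdicComplete (maximalIdeal R) R]
    (p : ℕ) [Fact p.Prime] [CharP R p]
    [IsLocalRing (RPlus R)] (Λ : Type) [Uncountable Λ]
    [(Ideal.map (MvPolynomial.C (σ := Λ)) (maximalIdeal (RPlus R))).IsPrime]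
    (d : ℕ) (x : Fin d → R) (hx : IsSOP R x)
    (n : ℕ) (hn1 : 1 ≤ n) (hnd : n ≤ d) (y : R) :
    ∃ N₀ : ℕ, 0 < N₀ ∧
      (⨆ N : ℕ, Submodule.colon (R := TRing R Λ) (M := TRing R Λ)
          (Ideal.span (⇑(toT R Λ) '' (x '' {i | (i : ℕ) < n})))
          (Ideal.span {toT R Λ y ^ N})) =
        Submodule.colon (R := TRing R Λ) (M := TRing R Λ)
          (Ideal.span (⇑(toT R Λ) '' (x '' {i | (i : ℕ) < n})))
          (Ideal.span {toT R Λ y ^ N₀}) := by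
  have stabilizes := stmt16_general (T := TRing R Λ) (ψ := plusToT R Λ) p (flat_plusToT Λ) hx
    {i | (i : ℕ) < n} (algebraMap R (RPlus R) y)
  exact stabilizes
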